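/- arXiv:2511.18592 — 2 statements merged into one kernel-verified Lean document; each statement's English description precedes it below -/
import Mathlib

section
/- Explicit stream function for Kirchhoff elliptical vortices (Lemma on stream functions for Kirchhoff vortices, items 1–2). For every ξ > 0 there exists c^ξ ∈ ℝ such that for all ζ ≥ ξ and all η ∈ ℝ, writing e(ζ,η) = (sech(ξ) cosh(ζ) cos(η), sech(ξ) sinh(ζ) sin(η)), one has (1/2π)∫_{E^ξ} log‖e(ζ,η) − y‖ dy − Ω^ξ‖e(ζ,η)‖²/2 − c^ξ = (tanh(ξ)/4)·(2(ζ−ξ) − (cosh(2ζ) − cosh(2ξ))/e^{2ξ}) + (tanh(ξ)/4)·(e^{−2ζ} − e^{−2ξ})·cos(2η). In particular, taking ζ = ξ, the quantity (1/2π)∫_{E^ξ} log‖x−y‖ dy − Ω^ξ‖x‖²/2 − c^ξ vanishes for every x ∈ Σ^ξ. -/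
open MeasureTheory Real

noncomputable section

/-- The Euclidean plane. -/
abbrev Pt := EuclideanSpace ℝ (Fin 2)

/-- The point of the plane with the given coordinates. -/
def pt (a b : ℝ) : Pt := (WithLp.equiv 2 (Fin 2 → ℝ)).symm ![a, b]

/-- The open ellipse `E^ξ = {x : x₁² + (x₂ / tanh ξ)² < 1}`. -/
def Eell (ξ : ℝ) : Set Pt := {x : Pt | (x 0) ^ 2 + (x 1 / Real.tanh ξ) ^ 2 < 1}

/-- The angular velocity `Ω^ξ = tanh ξ / (1 + tanh ξ)²` of the `ξ`-Kirchhoff vortex. -/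
def Ωell (ξ : ℝ) : ℝ := Real.tanh ξ / (1 + Real.tanh ξ) ^ 2

/-- The elliptical coordinates map
`(ζ, η) ↦ (sech ξ · cosh ζ · cos η, sech ξ · sinh ζ · sin η)`. -/
def ept (ξ ζ η : ℝ) : Pt :=
  pt ((Real.cosh ξ)⁻¹ * Real.cosh ζ * Real.cos η)
    ((Real.cosh ξ)⁻¹ * Real.sinh ζ * Real.sin η)

/-!
The map `z = c cosh v` with `v = s + it`, `0 < s < ξ`, parametrises an ellipse with foci `±c`. For
`|Re v| < Re w` the factorisation
`cosh w - cosh v = (e^w / 2) (1 - e^(v - w)) (1 - e^(-v - w))` and the Taylor series of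
`log (1 - z)` give the Fourier series in `t` of the logarithmic kernel on each confocal ellipse.
The Jacobian `c² |sinh v|² = c² (cosh 2s - cos 2t) / 2` has only the frequencies `0` and `2`, so
just two Fourier coefficients of the kernel survive the integration in `t`.
-/

theorem integrableOn_log_norm_sub {E : Type*} [NormedAddCommGroup E] [NormedSpace ℝ E]
    [FiniteDimensional ℝ E] [MeasurableSpace E] [BorelSpace E] (μ : Measure E)
    [μ.IsAddHaarMeasure] (a : E) {s : Set E} (hs : Bornology.IsBounded s) :
    IntegrableOn (fun x => log ‖a - x‖) s μ := by
  nontriviality E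
  obtain ⟨R, hR⟩ := hs.subset_ball a
  have radial : IntegrableOn (fun r : ℝ => r ^ (Module.finrank ℝ E - 1) • log r)
      (Set.Ioo 0 R) := by
    have hlog : IntegrableOn log (Set.Icc 0 R) := by
      rcases le_or_gt 0 R with h | h
      · exact (intervalIntegrable_iff_integrableOn_Icc_of_le h).1
          intervalIntegral.intervalIntegrable_log'
      · simp [h]
    exact (hlog.continuousOn_smul (by fun_prop) isCompact_Icc).mono_set Set.Ioo_subset_Icc_self
  have centred : IntegrableOn (fun x : E => log ‖x‖) (Metric.ball 0 R) μ :=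
    (integrableOn_fun_norm_addHaar μ).2 radial
  have translated := ((μ.measurePreserving_sub_left a).integrableOn_comp_preimage
    (MeasurableEquiv.subLeft a).measurableEmbedding).2 centred
  refine translated.mono_set (hR.trans fun x hx => ?_)
  simpa [dist_eq_norm', norm_sub_rev] using hx

theorem integral_cos_int_mul_add (k : ℤ) (b : ℝ) :
    ∫ t in (-π)..π, cos (k * t + b) = if k = 0 then 2 * π * cos b else 0 := by
  split_ifs with hk
  · simp [hk, two_mul, add_mul]
  · have hends : sin (k * π + b) = sin (k * -π + b) := by
      rw [← sin_add_int_mul_two_pi (k * -π + b) k]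
      ring_nf
    rw [intervalIntegral.integral_comp_mul_add _ (Int.cast_ne_zero.2 hk), integral_cos, hends,
      sub_self, smul_zero]

theorem integral_cos_nat_mul_add_mul_cos_nat_mul {n : ℕ} (hn : n ≠ 0) (m : ℕ) (b : ℝ) :
    ∫ t in (-π)..π, cos (n * t + b) * cos (m * t) = if n = m then π * cos b else 0 := by
  have product_to_sum (t : ℝ) : cos (n * t + b) * cos (m * t) =
      (cos (((n - m : ℤ) : ℝ) * t + b) + cos (((n + m : ℤ) : ℝ) * t + b)) / 2 := by
    rw [eq_div_iff two_ne_zero, mul_comm, ← mul_assoc, two_mul_cos_mul_cos]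
    push_cast
    ring_nf
  simp_rw [product_to_sum]
  rw [intervalIntegral.integral_div, intervalIntegral.integral_add
    (Continuous.intervalIntegrable (by fun_prop) _ _)
    (Continuous.intervalIntegrable (by fun_prop) _ _),
    integral_cos_int_mul_add, integral_cos_int_mul_add, if_neg (by omega : (n + m : ℤ) ≠ 0)]
  split_ifs <;> first | omega | ring

theorem one_sub_exp_ne_zero {a : ℂ} (ha : a.re < 0) : 1 - Complex.exp a ≠ 0 := by
  intro h
  have := congrArg norm (sub_eq_zero.1 h)
  rw [norm_one, Complex.norm_exp, eq_comm, exp_eq_one_iff] at this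
  exact ha.ne this

theorem intervalIntegrable_log_norm_one_sub_exp_mul_cos {a : ℂ} (ha : a.re < 0) (m : ℝ)
    (x y : ℝ) : IntervalIntegrable
      (fun t : ℝ => log ‖1 - Complex.exp (a + t * Complex.I)‖ * cos (m * t)) volume x y := by
  have hne (t : ℝ) : ‖1 - Complex.exp (a + t * Complex.I)‖ ≠ 0 :=
    norm_ne_zero_iff.2 (one_sub_exp_ne_zero (by simpa using ha))
  exact (((by fun_prop : Continuous _).log hne).mul (by fun_prop)).intervalIntegrable _ _

theorem hasSum_exp_mul_cos_div {a : ℂ} (ha : a.re < 0) :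
    HasSum (fun n : ℕ => exp (n * a.re) * cos (n * a.im) / n) (-log ‖1 - Complex.exp a‖) := by
  have hexp : ‖Complex.exp a‖ < 1 := by rwa [Complex.norm_exp, exp_lt_one_iff]
  have h := Complex.hasSum_re (Complex.hasSum_taylorSeries_neg_log hexp)
  rw [Complex.neg_re, Complex.log_re] at h
  refine h.congr_fun fun n => ?_
  rw [← Complex.exp_nat_mul, Complex.div_natCast_re, Complex.exp_re]
  simp

theorem hasSum_integral_log_norm_one_sub_exp_mul_cos {a : ℂ} (ha : a.re < 0) (m : ℝ) :
    HasSum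
      (fun n : ℕ => ∫ t in (-π)..π, exp (n * a.re) / n * (cos (n * t + n * a.im) * cos (m * t)))
      (∫ t in (-π)..π, -log ‖1 - Complex.exp (a + t * Complex.I)‖ * cos (m * t)) := by
  refine intervalIntegral.hasSum_integral_of_dominated_convergence
    (fun n _ => exp a.re ^ n) (fun n => Continuous.aestronglyMeasurable (by fun_prop))
    (fun n => .of_forall fun t _ => ?_) (.of_forall fun t _ => ?_) (by simp)
    (.of_forall fun t _ => ?_)
  · rw [norm_mul, norm_mul, norm_div, norm_natCast, norm_of_nonneg (exp_pos _).le, ← exp_nat_mul]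
    have hdiv : exp (n * a.re) / n ≤ exp (n * a.re) := by
      rcases n.eq_zero_or_pos with rfl | hn
      · simp
      · exact div_le_self (exp_pos _).le (Nat.one_le_cast.2 hn)
    calc exp (n * a.re) / n * (‖cos (n * t + n * a.im)‖ * ‖cos (m * t)‖)
        ≤ exp (n * a.re) * (1 * 1) := by
          gcongr
          exacts [abs_cos_le_one _, abs_cos_le_one _]
      _ = exp (n * a.re) := by rw [mul_one, mul_one]
  · exact summable_geometric_of_lt_one (exp_pos _).le (exp_lt_one_iff.2 ha)
  · have h := hasSum_exp_mul_cos_div (a := a + t * Complex.I) (by simpa using ha)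
    refine (h.mul_right (cos (m * t))).congr_fun fun n => ?_
    simp only [Complex.add_re, Complex.mul_re, Complex.ofReal_re, Complex.I_re, mul_zero,
      Complex.ofReal_im, Complex.I_im, mul_one, sub_self, add_zero, Complex.add_im,
      Complex.mul_im]
    ring_nf

-- For `m = 0` the right-hand side contains `π / 0 = 0`, which is the true mean of `log ‖1 - z‖`
-- over a circle of radius less than one.
theorem integral_log_norm_one_sub_exp_mul_cos {a : ℂ} (ha : a.re < 0) (m : ℕ) :
    ∫ t in (-π)..π, log ‖1 - Complex.exp (a + t * Complex.I)‖ * cos (m * t) =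
      -(π / m * exp (m * a.re) * cos (m * a.im)) := by
  have termwise := hasSum_integral_log_norm_one_sub_exp_mul_cos ha m
  have coefficient (n : ℕ) :
      ∫ t in (-π)..π, exp (n * a.re) / n * (cos (n * t + n * a.im) * cos (m * t)) =
        if n = m then π / m * exp (m * a.re) * cos (m * a.im) else 0 := by
    rcases eq_or_ne n 0 with rfl | hn
    · rcases eq_or_ne m 0 with rfl | hm
      · simp
      · simp [hm.symm]
    · rw [intervalIntegral.integral_const_mul, integral_cos_nat_mul_add_mul_cos_nat_mul hn]
      split_ifs with hnm
      · subst hnm; ring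
      · simp
  simp_rw [coefficient, neg_mul, intervalIntegral.integral_neg] at termwise
  rw [← termwise.unique (hasSum_ite_eq m _), neg_neg]

theorem cosh_eq_mk (v : ℂ) :
    Complex.cosh v = ⟨cosh v.re * cos v.im, sinh v.re * sin v.im⟩ := by
  conv_lhs => rw [← Complex.re_add_im v, Complex.cosh_add, Complex.cosh_mul_I, Complex.sinh_mul_I]
  rw [Complex.mk_eq_add_mul_I]
  push_cast
  ring

theorem norm_sinh_sq (v : ℂ) :
    ‖Complex.sinh v‖ ^ 2 = (cosh (2 * v.re) - cos (2 * v.im)) / 2 := by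
  have product_to_sum : Complex.sinh v * Complex.sinh (starRingEnd ℂ v) =
      (Complex.cosh (v + starRingEnd ℂ v) - Complex.cosh (v - starRingEnd ℂ v)) / 2 := by
    rw [Complex.cosh_add, Complex.cosh_sub]
    ring
  apply Complex.ofReal_injective
  rw [Complex.ofReal_pow, ← Complex.mul_conj', ← Complex.sinh_conj, product_to_sum,
    Complex.add_conj, Complex.sub_conj, Complex.cosh_mul_I]
  push_cast
  rfl

theorem cosh_sub_cosh_eq_exp_mul (w v : ℂ) :
    Complex.cosh w - Complex.cosh v =
      Complex.exp w / 2 * (1 - Complex.exp (v - w)) * (1 - Complex.exp (-v - w)) := by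
  simp only [Complex.cosh, Complex.exp_sub, Complex.exp_neg]
  field_simp [Complex.exp_ne_zero]
  ring

theorem cosh_sub_cosh_ne_zero {w v : ℂ} (h : |v.re| < w.re) :
    Complex.cosh w - Complex.cosh v ≠ 0 := by
  obtain ⟨h₁, h₂⟩ := abs_lt.1 h
  rw [cosh_sub_cosh_eq_exp_mul]
  exact mul_ne_zero (mul_ne_zero (div_ne_zero (Complex.exp_ne_zero w) two_ne_zero)
    (one_sub_exp_ne_zero (by simpa using h₂))) (one_sub_exp_ne_zero (by simpa using neg_lt.1 h₁))

-- The second factor is conjugated so that `Im v` enters both factors with the same sign.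
theorem log_norm_mul_cosh_sub_cosh {c : ℝ} (hc : 0 < c) {w v : ℂ} (h : |v.re| < w.re) :
    log ‖c * Complex.cosh w - c * Complex.cosh v‖ =
      log (c / 2) + w.re + log ‖1 - Complex.exp (v - w)‖ +
        log ‖1 - Complex.exp (-starRingEnd ℂ v - starRingEnd ℂ w)‖ := by
  obtain ⟨h₁, h₂⟩ := abs_lt.1 h
  have n₁ : 1 - Complex.exp (v - w) ≠ 0 := one_sub_exp_ne_zero (by simpa using h₂)
  have n₂ : 1 - Complex.exp (-starRingEnd ℂ v - starRingEnd ℂ w) ≠ 0 :=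
    one_sub_exp_ne_zero (by simpa using neg_lt.1 h₁)
  have hconj : ‖1 - Complex.exp (-v - w)‖ =
      ‖1 - Complex.exp (-starRingEnd ℂ v - starRingEnd ℂ w)‖ := by
    rw [← Complex.norm_conj, map_sub, map_one, ← Complex.exp_conj, map_sub, map_neg]
  have hnorm : ‖c * Complex.cosh w - c * Complex.cosh v‖ = c / 2 * exp w.re *
      ‖1 - Complex.exp (v - w)‖ * ‖1 - Complex.exp (-starRingEnd ℂ v - starRingEnd ℂ w)‖ := by
    rw [← mul_sub, cosh_sub_cosh_eq_exp_mul, ← hconj]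
    simp only [norm_mul, norm_div, Complex.norm_real, norm_of_nonneg hc.le, Complex.norm_exp,
      Complex.norm_ofNat]
    ring
  rw [hnorm, log_mul (by positivity) (by positivity), log_mul (by positivity) (by positivity),
    log_mul (by positivity) (by positivity), log_exp]

theorem injOn_cosh : Set.InjOn Complex.cosh (Set.Ioi 0 ×ℂ Set.Ioc (-π) π) := by
  rintro v ⟨hv, hv₁, hv₂⟩ w ⟨hw, hw₁, hw₂⟩ h
  have hneg : (-w - v).re < 0 := by
    rw [Complex.sub_re, Complex.neg_re]
    exact sub_neg.2 ((neg_neg_of_pos hw).trans hv)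
  have hprod := cosh_sub_cosh_eq_exp_mul v w
  rw [sub_eq_zero.2 h, eq_comm, mul_eq_zero_iff_right (one_sub_exp_ne_zero hneg),
    mul_eq_zero_iff_left (div_ne_zero (Complex.exp_ne_zero v) two_ne_zero), sub_eq_zero,
    Complex.exp_sub, eq_comm, div_eq_one_iff_eq (Complex.exp_ne_zero v)] at hprod
  exact Complex.exp_inj_of_neg_pi_lt_of_le_pi hv₁ hv₂ hw₁ hw₂ hprod.symm

theorem exists_cosh_eq (z : ℂ) :
    ∃ v : ℂ, 0 ≤ v.re ∧ v.im ∈ Set.Ioc (-π) π ∧ Complex.cosh v = z := by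
  obtain ⟨x, hx⟩ := Complex.cos_surjective z
  obtain ⟨y, hy, hyz⟩ : ∃ y : ℂ, 0 ≤ y.re ∧ Complex.cosh y = z := by
    rw [← Complex.cosh_mul_I] at hx
    rcases le_total 0 (x * Complex.I).re with h | h
    · exact ⟨_, h, hx⟩
    · exact ⟨-(x * Complex.I), by simpa using h, by rwa [Complex.cosh_neg]⟩
  have hlog : Complex.exp (Complex.log (Complex.exp y)) = Complex.exp y :=
    Complex.exp_log (Complex.exp_ne_zero y)
  refine ⟨Complex.log (Complex.exp y), ?_, ?_, ?_⟩
  · rwa [Complex.log_re, Complex.norm_exp, log_exp]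
  · rw [Complex.log_im]
    exact Complex.arg_mem_Ioc _
  · rw [← hyz, Complex.cosh, Complex.exp_neg, hlog, ← Complex.exp_neg, Complex.cosh]

theorem det_smul_one (a : ℂ) : (a • (1 : ℂ →L[ℝ] ℂ)).det = ‖a‖ ^ 2 := by
  rw [← Complex.normSq_eq_norm_sq, ← Algebra.norm_complex_apply, Algebra.norm_apply]
  rfl

section

variable {F : Type*} [NormedAddCommGroup F] [NormedSpace ℝ F] {f f' : ℂ → ℂ} {s : Set ℂ}

theorem integrableOn_image_iff_integrableOn_norm_deriv_sq_smul (hs : MeasurableSet s)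
    (hf' : ∀ z ∈ s, HasDerivWithinAt f (f' z) s z) (hf : Set.InjOn f s) (g : ℂ → F) :
    IntegrableOn g (f '' s) ↔ IntegrableOn (fun z => ‖f' z‖ ^ 2 • g (f z)) s := by
  rw [integrableOn_image_iff_integrableOn_abs_det_fderiv_smul volume hs
    (fun z hz => (hf' z hz).complexToReal_fderiv) hf]
  simp_rw [det_smul_one, abs_sq]

theorem integral_image_eq_integral_norm_deriv_sq_smul (hs : MeasurableSet s)
    (hf' : ∀ z ∈ s, HasDerivWithinAt f (f' z) s z) (hf : Set.InjOn f s) (g : ℂ → F) :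
    ∫ z in f '' s, g z = ∫ z in s, ‖f' z‖ ^ 2 • g (f z) := by
  rw [integral_image_eq_integral_abs_det_fderiv_smul volume hs
    (fun z hz => (hf' z hz).complexToReal_fderiv) hf]
  simp_rw [det_smul_one, abs_sq]

theorem setIntegral_reProdIm {g : ℂ → F} {s t : Set ℝ} (hg : IntegrableOn g (s ×ℂ t)) :
    ∫ z in s ×ℂ t, g z = ∫ x in s, ∫ y in t, g (x + y * Complex.I) := by
  have e := Complex.volume_preserving_equiv_real_prod.symm
  have hpre : Complex.measurableEquivRealProd.symm ⁻¹' (s ×ℂ t) = s ×ˢ t := by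
    ext p
    simp [Complex.mem_reProdIm, Complex.measurableEquivRealProd_symm_apply]
  rw [← e.setIntegral_preimage_emb (MeasurableEquiv.measurableEmbedding _), hpre,
    Measure.volume_eq_prod, setIntegral_prod]
  · simp_rw [Complex.measurableEquivRealProd_symm_apply, Complex.mk_eq_add_mul_I]
  · rw [← hpre, ← Measure.volume_eq_prod]
    exact (e.integrableOn_comp_preimage (MeasurableEquiv.measurableEmbedding _)).2 hg

end

/-- The open elliptical region in `ℂ` with foci `±c` and semi-axes `c cosh ξ`, `c sinh ξ`: in
elliptic coordinates `z = c cosh v` it is `|Re v| < ξ`. -/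
def ellipse (c ξ : ℝ) : Set ℂ :=
  {z | (z.re / (c * cosh ξ)) ^ 2 + (z.im / (c * sinh ξ)) ^ 2 < 1}

section

variable {c ξ : ℝ}

theorem isBounded_ellipse (hc : 0 < c) (hξ : 0 < ξ) : Bornology.IsBounded (ellipse c ξ) := by
  refine ((Metric.isBounded_Ioo (-(c * cosh ξ)) (c * cosh ξ)).reProdIm
    (Metric.isBounded_Ioo (-(c * sinh ξ)) (c * sinh ξ))).subset fun z hz => ?_
  have ha : 0 < c * cosh ξ := mul_pos hc (cosh_pos ξ)
  have hb : 0 < c * sinh ξ := mul_pos hc (sinh_pos_iff.2 hξ)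
  have hz : (z.re / (c * cosh ξ)) ^ 2 + (z.im / (c * sinh ξ)) ^ 2 < 1 := hz
  have hre := (le_add_of_nonneg_right (sq_nonneg _)).trans_lt hz
  have him := (le_add_of_nonneg_left (sq_nonneg _)).trans_lt hz
  rw [sq_lt_one_iff_abs_lt_one, abs_div, abs_of_pos ha, div_lt_one ha, abs_lt] at hre
  rw [sq_lt_one_iff_abs_lt_one, abs_div, abs_of_pos hb, div_lt_one hb, abs_lt] at him
  exact ⟨hre, him⟩

theorem mul_cosh_mem_ellipse_iff (hc : c ≠ 0) (hξ : 0 < ξ) (v : ℂ) :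
    c * Complex.cosh v ∈ ellipse c ξ ↔ |v.re| < ξ := by
  have : 0 < sinh ξ := sinh_pos_iff.2 hξ
  have hpos : 0 < cos v.im ^ 2 / cosh ξ ^ 2 + sin v.im ^ 2 / sinh ξ ^ 2 := by
    rcases (sq_nonneg (cos v.im)).eq_or_lt' with h | h
    · rw [h, sin_sq, h]
      positivity
    · positivity
  have defect : 1 - ((cosh v.re * cos v.im / cosh ξ) ^ 2 + (sinh v.re * sin v.im / sinh ξ) ^ 2) =
      (sinh ξ ^ 2 - sinh v.re ^ 2) * (cos v.im ^ 2 / cosh ξ ^ 2 + sin v.im ^ 2 / sinh ξ ^ 2) := by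
    field_simp
    rw [sin_sq, cosh_sq, cosh_sq]
    ring
  rw [ellipse, Set.mem_ofPred_eq, Complex.re_ofReal_mul, Complex.im_ofReal_mul, cosh_eq_mk,
    mul_div_mul_left _ _ hc, mul_div_mul_left _ _ hc, ← sub_pos, defect,
    mul_pos_iff_of_pos_right hpos, sub_pos, sq_lt_sq, abs_sinh, abs_sinh, sinh_lt_sinh,
    abs_of_pos hξ]

theorem image_mul_cosh_ae_eq_ellipse (hc : c ≠ 0) (hξ : 0 < ξ) :
    (fun v : ℂ => c * Complex.cosh v) '' (Set.Ioo 0 ξ ×ℂ Set.Ioc (-π) π) =ᵐ[volume]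
      ellipse c ξ := by
  have off_axis : ∀ᵐ z : ℂ, z.im ≠ 0 :=
    Complex.volume_preserving_equiv_real_prod.quasiMeasurePreserving.ae
      (Measure.quasiMeasurePreserving_snd.ae (Measure.ae_ne volume (0 : ℝ)))
  filter_upwards [off_axis] with z hz
  refine propext ⟨?_, fun h => ?_⟩
  · rintro ⟨v, ⟨⟨hpos, hlt⟩, -⟩, rfl⟩
    exact (mul_cosh_mem_ellipse_iff hc hξ v).2 ((abs_of_pos hpos).trans_lt hlt)
  · obtain ⟨v, hre, him, hv⟩ := exists_cosh_eq (z / c)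
    have hzv : c * Complex.cosh v = z := by
      rw [hv, mul_div_cancel₀ _ (Complex.ofReal_ne_zero.2 hc)]
    have hre_ne : v.re ≠ 0 := by
      intro h0
      apply hz
      rw [← hzv, Complex.im_ofReal_mul, cosh_eq_mk, h0, sinh_zero, zero_mul, mul_zero]
    rw [← hzv] at h
    exact ⟨v, ⟨⟨hre.lt_of_ne' hre_ne, (le_abs_self _).trans_lt
      ((mul_cosh_mem_ellipse_iff hc hξ v).1 h)⟩, him⟩, hzv⟩

end

theorem setIntegral_ellipse_eq {F : Type*} [NormedAddCommGroup F] [NormedSpace ℝ F] {c ξ : ℝ}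
    (hc : c ≠ 0) (hξ : 0 < ξ) {f : ℂ → F} (hf : IntegrableOn f (ellipse c ξ)) :
    ∫ z in ellipse c ξ, f z = ∫ s in 0..ξ, ∫ t in (-π)..π,
      ‖c * Complex.sinh (s + t * Complex.I)‖ ^ 2 •
        f (c * Complex.cosh (s + t * Complex.I)) := by
  have hS : MeasurableSet (Set.Ioo 0 ξ ×ℂ Set.Ioc (-π) π) :=
    (Complex.measurable_re measurableSet_Ioo).inter (Complex.measurable_im measurableSet_Ioc)
  have hderiv : ∀ v ∈ Set.Ioo 0 ξ ×ℂ Set.Ioc (-π) π,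
      HasDerivWithinAt (fun v => c * Complex.cosh v) (c * Complex.sinh v)
        (Set.Ioo 0 ξ ×ℂ Set.Ioc (-π) π) v :=
    fun v _ => ((Complex.hasDerivAt_cosh v).const_mul _).hasDerivWithinAt
  have hinj : Set.InjOn (fun v => c * Complex.cosh v) (Set.Ioo 0 ξ ×ℂ Set.Ioc (-π) π) :=
    (mul_right_injective₀ (Complex.ofReal_ne_zero.2 hc)).comp_injOn
      (injOn_cosh.mono (Set.inter_subset_inter_left _ (Set.preimage_mono Set.Ioo_subset_Ioi_self)))
  have hf' := (integrableOn_image_iff_integrableOn_norm_deriv_sq_smul hS hderiv hinj f).1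
    (hf.congr_set_ae (image_mul_cosh_ae_eq_ellipse hc hξ))
  rw [← setIntegral_congr_set (image_mul_cosh_ae_eq_ellipse hc hξ),
    integral_image_eq_integral_norm_deriv_sq_smul hS hderiv hinj, setIntegral_reProdIm hf',
    ← integral_Ioc_eq_integral_Ioo, intervalIntegral.integral_of_le hξ.le]
  simp_rw [intervalIntegral.integral_of_le (neg_le_self pi_pos.le)]

theorem integral_log_norm_mul_cosh_sub_cosh_mul_cos {c : ℝ} (hc : 0 < c) {w : ℂ} {s : ℝ}
    (hs : |s| < w.re) (m : ℕ) :
    ∫ t in (-π)..π,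
        log ‖c * Complex.cosh w - c * Complex.cosh (s + t * Complex.I)‖ * cos (m * t) =
      (log (c / 2) + w.re) * (∫ t in (-π)..π, cos (m * t)) -
        2 * π / m * exp (-(m * w.re)) * cosh (m * s) * cos (m * w.im) := by
  have h₁ : (s - w : ℂ).re < 0 := by simpa using (abs_lt.1 hs).2
  have h₂ : (-s - starRingEnd ℂ w : ℂ).re < 0 := by simpa using neg_lt.1 (abs_lt.1 hs).1
  have hconj (t : ℝ) : -starRingEnd ℂ (s + t * Complex.I) - starRingEnd ℂ w =
      -s - starRingEnd ℂ w + t * Complex.I := by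
    simp only [map_add, map_mul, Complex.conj_ofReal, Complex.conj_I]
    ring
  have factor (t : ℝ) :
      log ‖c * Complex.cosh w - c * Complex.cosh (s + t * Complex.I)‖ * cos (m * t) =
        (log (c / 2) + w.re) * cos (m * t) +
        log ‖1 - Complex.exp (s - w + t * Complex.I)‖ * cos (m * t) +
        log ‖1 - Complex.exp (-s - starRingEnd ℂ w + t * Complex.I)‖ * cos (m * t) := by
    rw [log_norm_mul_cosh_sub_cosh hc (by simpa using hs), hconj, add_sub_right_comm, add_mul,
      add_mul]
  have hint₀ : IntervalIntegrable (fun t => (log (c / 2) + w.re) * cos (m * t)) volume (-π) π :=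
    Continuous.intervalIntegrable (by fun_prop) _ _
  have hint₁ := intervalIntegrable_log_norm_one_sub_exp_mul_cos h₁ m (-π) π
  have hint₂ := intervalIntegrable_log_norm_one_sub_exp_mul_cos h₂ m (-π) π
  simp_rw [factor]
  rw [intervalIntegral.integral_add (hint₀.add hint₁) hint₂,
    intervalIntegral.integral_add hint₀ hint₁,
    intervalIntegral.integral_const_mul, integral_log_norm_one_sub_exp_mul_cos h₁,
    integral_log_norm_one_sub_exp_mul_cos h₂]
  have hre₁ : (s - w : ℂ).re = s - w.re := by simp
  have him₁ : (s - w : ℂ).im = -w.im := by simp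
  have hre₂ : (-s - starRingEnd ℂ w : ℂ).re = -s - w.re := by simp
  have him₂ : (-s - starRingEnd ℂ w : ℂ).im = w.im := by simp
  rw [hre₁, him₁, hre₂, him₂, cosh_eq (m * s), mul_neg, cos_neg, mul_sub, mul_sub, sub_eq_add_neg,
    sub_eq_add_neg, exp_add, exp_add, mul_neg]
  ring

theorem integral_norm_mul_sinh_sq_mul_log {c : ℝ} (hc : 0 < c) {w : ℂ} {s : ℝ}
    (hs : |s| < w.re) :
    ∫ t in (-π)..π, ‖c * Complex.sinh (s + t * Complex.I)‖ ^ 2 *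
        log ‖c * Complex.cosh w - c * Complex.cosh (s + t * Complex.I)‖ =
      π * c ^ 2 * cosh (2 * s) *
        (log (c / 2) + w.re + exp (-(2 * w.re)) * cos (2 * w.im) / 2) := by
  let L (t : ℝ) : ℝ := log ‖c * Complex.cosh w - c * Complex.cosh (s + t * Complex.I)‖
  have continuous_L : Continuous L := by
    refine Continuous.log (by fun_prop) fun t => norm_ne_zero_iff.2 ?_
    rw [← mul_sub]
    exact mul_ne_zero (Complex.ofReal_ne_zero.2 hc.ne') (cosh_sub_cosh_ne_zero (by simpa using hs))
  have mean : ∫ t in (-π)..π, L t = 2 * π * (log (c / 2) + w.re) := by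
    simpa [mul_comm (2 * π), ← two_mul] using integral_log_norm_mul_cosh_sub_cosh_mul_cos hc hs 0
  have second_mode : ∫ t in (-π)..π, L t * cos (2 * t) =
      -(π * exp (-(2 * w.re)) * cosh (2 * s) * cos (2 * w.im)) := by
    simpa using integral_log_norm_mul_cosh_sub_cosh_mul_cos hc hs 2
  have weight (t : ℝ) : ‖c * Complex.sinh (s + t * Complex.I)‖ ^ 2 * L t =
      c ^ 2 / 2 * (cosh (2 * s) * L t - L t * cos (2 * t)) := by
    rw [norm_mul, mul_pow, norm_sinh_sq, Complex.norm_real, norm_eq_abs, sq_abs]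
    simp only [Complex.add_re, Complex.mul_re, Complex.ofReal_re, Complex.I_re, mul_zero,
      Complex.ofReal_im, Complex.I_im, mul_one, sub_self, add_zero, Complex.add_im,
      Complex.mul_im, zero_add]
    ring
  rw [intervalIntegral.integral_congr fun t _ => weight t,
    intervalIntegral.integral_const_mul, intervalIntegral.integral_sub
    (Continuous.intervalIntegrable (by fun_prop) _ _)
    (Continuous.intervalIntegrable (by fun_prop) _ _),
    intervalIntegral.integral_const_mul, mean, second_mode]
  ring

theorem integral_log_norm_sub_ellipse {c ξ : ℝ} (hc : 0 < c) (hξ : 0 < ξ) {w : ℂ}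
    (hw : ξ ≤ w.re) :
    ∫ z in ellipse c ξ, log ‖c * Complex.cosh w - z‖ =
      π * c ^ 2 * (sinh (2 * ξ) / 2) *
        (log (c / 2) + w.re + exp (-(2 * w.re)) * cos (2 * w.im) / 2) := by
  have hcosh : ∫ s in 0..ξ, cosh (2 * s) = sinh (2 * ξ) / 2 := by
    rw [intervalIntegral.integral_eq_sub_of_hasDerivAt (f := fun s => sinh (2 * s) / 2)
      (fun s _ => by simpa using (((hasDerivAt_id s).const_mul 2).sinh.div_const 2))
      (Continuous.intervalIntegrable (by fun_prop) _ _)]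
    simp
  rw [setIntegral_ellipse_eq hc.ne' hξ
    (integrableOn_log_norm_sub volume _ (isBounded_ellipse hc hξ)), ← hcosh,
    ← intervalIntegral.integral_const_mul, ← intervalIntegral.integral_mul_const]
  exact intervalIntegral.integral_congr_Ioo_of_le hξ.le fun s hs =>
    integral_norm_mul_sinh_sq_mul_log hc ((abs_of_pos hs.1).trans_lt (hs.2.trans_le hw))

theorem repr_orthonormalBasisOneI_eq_pt (z : ℂ) :
    Complex.orthonormalBasisOneI.repr z = pt z.re z.im := by
  ext i
  rw [Complex.orthonormalBasisOneI_repr_apply]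
  fin_cases i <;> rfl

theorem ept_eq_repr (ξ ζ η : ℝ) : ept ξ ζ η = Complex.orthonormalBasisOneI.repr
    (((cosh ξ)⁻¹ : ℝ) * Complex.cosh (ζ + η * Complex.I)) := by
  rw [repr_orthonormalBasisOneI_eq_pt, Complex.re_ofReal_mul, Complex.im_ofReal_mul, cosh_eq_mk,
    ept]
  simp [mul_assoc]

theorem preimage_repr_Eell (ξ : ℝ) :
    Complex.orthonormalBasisOneI.repr ⁻¹' Eell ξ = ellipse (cosh ξ)⁻¹ ξ := by
  ext z
  simp [Eell, ellipse, repr_orthonormalBasisOneI_eq_pt, pt, tanh_eq_sinh_div_cosh,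
    inv_mul_cancel₀ (cosh_pos ξ).ne', div_eq_inv_mul]

theorem integral_log_norm_ept_sub {ξ ζ : ℝ} (hξ : 0 < ξ) (hζ : ξ ≤ ζ) (η : ℝ) :
    ∫ y in Eell ξ, log ‖ept ξ ζ η - y‖ =
      π * tanh ξ * (log ((cosh ξ)⁻¹ / 2) + ζ + exp (-(2 * ζ)) * cos (2 * η) / 2) := by
  have hcosh : cosh ξ ≠ 0 := (cosh_pos ξ).ne'
  rw [← Complex.orthonormalBasisOneI.measurePreserving_repr.setIntegral_preimage_emb
    Complex.orthonormalBasisOneI.repr.toHomeomorph.measurableEmbedding, preimage_repr_Eell,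
    ept_eq_repr]
  simp_rw [← map_sub, LinearIsometryEquiv.norm_map]
  rw [integral_log_norm_sub_ellipse (inv_pos.2 (cosh_pos ξ)) hξ (by simpa using hζ),
    sinh_two_mul, tanh_eq_sinh_div_cosh]
  simp only [Complex.add_re, Complex.add_im, Complex.re_ofReal_mul, Complex.im_ofReal_mul,
    Complex.ofReal_re, Complex.ofReal_im, Complex.I_re, Complex.I_im, mul_zero, mul_one, add_zero,
    zero_add]
  field_simp

theorem norm_ept_sq (ξ ζ η : ℝ) :
    ‖ept ξ ζ η‖ ^ 2 = (cosh (2 * ζ) + cos (2 * η)) / (2 * cosh ξ ^ 2) := by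
  rw [EuclideanSpace.norm_sq_eq, Fin.sum_univ_two, norm_eq_abs, norm_eq_abs, sq_abs, sq_abs,
    cosh_two_mul, cos_two_mul, sinh_sq]
  change (_ * _ * _) ^ 2 + (_ * _ * _) ^ 2 = _
  have := (cosh_pos ξ).ne'
  field_simp
  rw [sinh_sq, sin_sq]
  ring

theorem Ωell_div_cosh_sq (ξ : ℝ) : Ωell ξ / cosh ξ ^ 2 = tanh ξ / exp (2 * ξ) := by
  have hcosh := (cosh_pos ξ).ne'
  have h : 1 + tanh ξ = exp ξ / cosh ξ := by
    rw [tanh_eq_sinh_div_cosh, ← cosh_add_sinh, add_div, div_self hcosh]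
  rw [Ωell, h, div_pow, ← exp_nat_mul, Nat.cast_two]
  field_simp

theorem exists_eq_ept_of_mem_frontier_Eell {ξ : ℝ} (hξ : ξ ≠ 0) {x : Pt}
    (hx : x ∈ frontier (Eell ξ)) : ∃ η, x = ept ξ ξ η := by
  have hcosh : cosh ξ ≠ 0 := (cosh_pos ξ).ne'
  have hsinh : sinh ξ ≠ 0 := sinh_ne_zero.2 hξ
  have on_ellipse : x 0 ^ 2 + (x 1 / tanh ξ) ^ 2 = 1 :=
    frontier_lt_subset_eq (f := fun x : Pt => x 0 ^ 2 + (x 1 / tanh ξ) ^ 2)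
      (by fun_prop) continuous_const hx
  let z : ℂ := ⟨x 0, x 1 / tanh ξ⟩
  have hz : ‖z‖ = 1 := by
    rw [← sq_eq_sq₀ (norm_nonneg z) zero_le_one, ← Complex.normSq_eq_norm_sq, Complex.normSq_apply,
      one_pow, ← on_ellipse, sq, sq]
  have hcos : cos z.arg = x 0 := by simpa only [hz, one_mul] using Complex.norm_mul_cos_arg z
  have hsin : sin z.arg = x 1 / tanh ξ := by
    simpa only [hz, one_mul] using Complex.norm_mul_sin_arg z
  refine ⟨z.arg, ?_⟩
  rw [ept, hcos, hsin, tanh_eq_sinh_div_cosh]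
  ext i
  fin_cases i
  · simp [pt, hcosh]
  · simp only [pt, Fin.mk_one, WithLp.equiv_symm_apply, Matrix.cons_val_one,
      Matrix.cons_val_fin_one]
    field_simp

theorem stream_function_ept {ξ ζ : ℝ} (hξ : 0 < ξ) (hζ : ξ ≤ ζ) (η : ℝ) :
    1 / (2 * π) * (∫ y in Eell ξ, log ‖ept ξ ζ η - y‖) - Ωell ξ * ‖ept ξ ζ η‖ ^ 2 / 2 =
      tanh ξ / 2 * (log ((cosh ξ)⁻¹ / 2) + ζ + exp (-(2 * ζ)) * cos (2 * η) / 2) -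
        tanh ξ / 4 * (cosh (2 * ζ) + cos (2 * η)) / exp (2 * ξ) := by
  have rotation : Ωell ξ * ‖ept ξ ζ η‖ ^ 2 / 2 =
      tanh ξ / exp (2 * ξ) * (cosh (2 * ζ) + cos (2 * η)) / 4 := by
    rw [norm_ept_sq, ← Ωell_div_cosh_sq]
    ring
  rw [integral_log_norm_ept_sub hξ hζ, rotation]
  field_simp

/-- **Explicit stream function for Kirchhoff elliptical vortices** (Lemma on
stream functions for Kirchhoff vortices, items 1–2). -/
theorem kirchhoff_stream_function_formula (ξ : ℝ) (hξ : 0 < ξ) :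
    ∃ cξ : ℝ,
      (∀ ζ η : ℝ, ξ ≤ ζ →
        (1 / (2 * π)) * (∫ y in Eell ξ, Real.log ‖ept ξ ζ η - y‖) -
            Ωell ξ * ‖ept ξ ζ η‖ ^ 2 / 2 - cξ =
          (Real.tanh ξ / 4) *
              (2 * (ζ - ξ) - (Real.cosh (2 * ζ) - Real.cosh (2 * ξ)) / Real.exp (2 * ξ)) +
            (Real.tanh ξ / 4) * (Real.exp (-(2 * ζ)) - Real.exp (-(2 * ξ))) *
              Real.cos (2 * η)) ∧
      ∀ x ∈ frontier (Eell ξ),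
        (1 / (2 * π)) * (∫ y in Eell ξ, Real.log ‖x - y‖) -
          Ωell ξ * ‖x‖ ^ 2 / 2 - cξ = 0 := by
  refine ⟨tanh ξ / 2 * (log ((cosh ξ)⁻¹ / 2) + ξ) - tanh ξ / 4 * cosh (2 * ξ) / exp (2 * ξ),
    fun ζ η hζ => ?_, fun x hx => ?_⟩
  · rw [stream_function_ept hξ hζ, exp_neg (2 * ξ)]
    ring
  · obtain ⟨η, rfl⟩ := exists_eq_ept_of_mem_frontier_Eell hξ.ne' hx
    rw [stream_function_ept hξ le_rfl, exp_neg]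
    ring
end
end

section
/- Normal derivative of the Kirchhoff stream function (Lemma on stream functions for Kirchhoff vortices, item 3). Fix ξ > 0 and define Ψ^ξ : ℝ² → ℝ by Ψ^ξ(x) = (1/2π)∫_{E^ξ} log‖x−y‖ dy − Ω^ξ‖x‖²/2. Then for every η ∈ ℝ the function ζ ↦ Ψ^ξ(sech(ξ) cosh(ζ) cos(η), sech(ξ) sinh(ζ) sin(η)) is differentiable at ζ = ξ with derivative equal to tanh(ξ)/(2e^{2ξ})·(cosh(2ξ) − cos(2η)), which is strictly positive; consequently inf_{x ∈ Σ^ξ} ‖∇Ψ^ξ(x)‖ > 0. -/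
open MeasureTheory Real

noncomputable section

/-- The relative stream function of the `ξ`-Kirchhoff vortex (without the
additive normalization constant). -/
def Ψell (ξ : ℝ) (x : Pt) : ℝ :=
  (1 / (2 * π)) * (∫ y in Eell ξ, Real.log ‖x - y‖) - Ωell ξ * ‖x‖ ^ 2 / 2

/-! Identify the plane with `ℂ`, write `b = tanh ξ`, and sweep out the ellipse by the curves
`w = verticalScale b u`, `‖u‖ = r < 1`. Its potential is `2 π b ∫ r * U r z dr`, where `U r z` is
the mean of `log ‖z - w‖` over `‖u‖ = r`. With `a = (1 + b) / 2`, on that circle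
`z - w = - (a / u) * (u - f / a) * (u - g / a)`, where `f`, `g` are the roots of
`X ^ 2 - z * X + r ^ 2 * (1 - b ^ 2) / 4` and `‖g‖ ≤ ‖f‖`, so Jensen's formula gives
`U r z = max (log (a * r)) (log ‖f‖)`. If `z` is not inside the ellipse, the maximum is `log ‖f‖`,
and its gradient is the conjugate of `1 / √(z ^ 2 - r ^ 2 * (1 - b ^ 2))`. Since `r ^ 2 / (2 * f)`
is a primitive of `r / √(z ^ 2 - r ^ 2 * (1 - b ^ 2))`, the gradient of the potential is
`π * b / conj f` at `r = 1`. At the boundary point `c + i b s`, where `f = a * (c + i s)`, this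
yields `∇Ψ = Ω • (b * c, s)`, which is `Ω` times the `ζ`-derivative of the elliptical coordinates.
-/

open Metric Filter Set
open scoped ComplexConjugate Topology InnerProductSpace NNReal

section Gradient

variable {E F : Type*} [NormedAddCommGroup E] [InnerProductSpace ℝ E] [CompleteSpace E]
  [NormedAddCommGroup F] [InnerProductSpace ℝ F] [CompleteSpace F]

lemma hasGradientAt_of_hasFDerivAt {f : E → ℝ} {f' : E →L[ℝ] ℝ} {g x : E}
    (hf : HasFDerivAt f f' x) (hg : ∀ v, f' v = ⟪g, v⟫_ℝ) : HasGradientAt f g x :=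
  hasGradientAt_iff_hasFDerivAt.2 (hf.congr_fderiv (ContinuousLinearMap.ext hg))

lemma hasGradientAt_const_mul {f : E → ℝ} {g x : E} (c : ℝ) (hf : HasGradientAt f g x) :
    HasGradientAt (fun y => c * f y) (c • g) x :=
  hasGradientAt_of_hasFDerivAt (hf.hasFDerivAt.const_mul c) fun v => by
    simp [real_inner_smul_left]

lemma hasGradientAt_sub {f₁ f₂ : E → ℝ} {g₁ g₂ x : E} (h₁ : HasGradientAt f₁ g₁ x)
    (h₂ : HasGradientAt f₂ g₂ x) : HasGradientAt (fun y => f₁ y - f₂ y) (g₁ - g₂) x :=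
  hasGradientAt_of_hasFDerivAt (h₁.hasFDerivAt.fun_sub h₂.hasFDerivAt) fun v => by
    simp [inner_sub_left]

lemma hasGradientAt_max_of_lt {f : E → ℝ} {g x : E} {c : ℝ} (hf : HasGradientAt f g x)
    (hc : c < f x) : HasGradientAt (fun y => max c (f y)) g x :=
  hf.congr_of_eventuallyEq ((hf.continuousAt.eventually_const_lt hc).mono fun _ hy =>
    max_eq_right hy.le)

lemma hasGradientAt_half_norm_sq (x : E) : HasGradientAt (fun y : E => ‖y‖ ^ 2 / 2) x x :=
  hasGradientAt_of_hasFDerivAt ((hasStrictFDerivAt_norm_sq x).hasFDerivAt.mul_const (2⁻¹ : ℝ))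
    fun v => by simp

lemma hasGradientAt_comp_linearIsometryEquiv {f : F → ℝ} {g : F} (e : E ≃ₗᵢ[ℝ] F) {x : E}
    (hf : HasGradientAt f g (e x)) : HasGradientAt (fun y => f (e y)) (e.symm g) x :=
  hasGradientAt_of_hasFDerivAt (hf.hasFDerivAt.comp x e.toContinuousLinearEquiv.hasFDerivAt)
    fun v => by simp [← e.inner_map_map (e.symm g)]

lemma hasGradientAt_integral_of_dominated_loc_of_lip {α : Type*} [MeasurableSpace α]
    {μ : Measure α} {f : E → α → ℝ} {g : α → E} {bound : α → ℝ} {s : Set E} {x : E}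
    (hs : s ∈ 𝓝 x) (hf_meas : ∀ᶠ y in 𝓝 x, AEStronglyMeasurable (f y) μ)
    (hf_int : Integrable (f x) μ) (hg_meas : AEStronglyMeasurable g μ)
    (h_lip : ∀ᵐ a ∂μ, LipschitzOnWith (Real.nnabs (bound a)) (f · a) s)
    (bound_int : Integrable bound μ) (h_diff : ∀ᵐ a ∂μ, HasGradientAt (f · a) (g a) x) :
    HasGradientAt (fun y => ∫ a, f y a ∂μ) (∫ a, g a ∂μ) x := by
  obtain ⟨hint, hderiv⟩ := hasFDerivAt_integral_of_dominated_loc_of_lip hs hf_meas hf_int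
    ((innerSL ℝ (E := E)).continuous.comp_aestronglyMeasurable hg_meas) h_lip bound_int
    (h_diff.mono fun a ha => ha.hasFDerivAt)
  have hg_int : Integrable g μ := hint.congr' hg_meas (.of_forall fun a => innerSL_apply_norm ℝ _)
  refine hasGradientAt_of_hasFDerivAt hderiv fun v => ?_
  exact DFunLike.congr_fun ((innerSL ℝ (E := E)).integral_comp_comm hg_int) v

lemma hasGradientAt_log_norm {f : ℂ → ℂ} {f' z : ℂ} (hf : HasDerivAt f f' z) (hz : f z ≠ 0) :
    HasGradientAt (fun w => Real.log ‖f w‖) (conj (f' / f z)) z := by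
  have hlog : (fun w => Real.log ‖f w‖) = fun w => Real.log (‖f w‖ ^ 2) * 2⁻¹ := by
    ext w
    rw [Real.log_pow]
    ring
  have hsq : HasFDerivAt (fun w => ‖f w‖ ^ 2) _ z := (hf.hasFDerivAt.restrictScalars ℝ).norm_sq
  rw [hlog]
  refine hasGradientAt_of_hasFDerivAt ((hsq.log (by positivity)).mul_const (2⁻¹ : ℝ)) fun v => ?_
  have hdiv : v * (f' / f z) = ((‖f z‖ ^ 2)⁻¹ : ℝ) * (v * f' * conj (f z)) := by
    rw [Complex.ofReal_inv, Complex.ofReal_pow, ← Complex.mul_conj']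
    field_simp [(map_ne_zero _).2 hz]
  simp only [smul_apply, ContinuousLinearMap.comp_apply, innerSL_apply_apply, nsmul_eq_mul,
    ContinuousLinearMap.coe_restrictScalars', ContinuousLinearMap.toSpanSingleton_apply,
    Complex.inner, smul_eq_mul, Complex.conj_conj, hdiv, Complex.re_ofReal_mul]
  ring

end Gradient

section Polar

variable {E : Type*} [NormedAddCommGroup E]

lemma integrableOn_log_norm_sub_ball [NormedSpace ℝ E] [FiniteDimensional ℝ E] [Nontrivial E]
    [MeasurableSpace E] [BorelSpace E] (μ : Measure E) [μ.IsAddHaarMeasure] (x : E) (R : ℝ) :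
    IntegrableOn (fun y => Real.log ‖x - y‖) (ball x R) μ := by
  have hzero : IntegrableOn (fun y : E => Real.log ‖y‖) (ball 0 R) μ := by
    rw [integrableOn_fun_norm_addHaar μ (f := Real.log)]
    have hlog : IntegrableOn Real.log (Icc 0 R) := by
      rcases le_or_gt 0 R with hR | hR
      · exact (intervalIntegrable_iff_integrableOn_Icc_of_le hR).1
          intervalIntegral.intervalIntegrable_log'
      · simp [Icc_eq_empty_of_lt hR]
    exact ((hlog.continuousOn_mul (continuous_pow _).continuousOn isCompact_Icc)).mono_set
      Ioo_subset_Icc_self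
  have hball : ball x R = (fun y => x - y) ⁻¹' ball 0 R := by
    ext y
    simp [dist_eq_norm, norm_sub_rev y x]
  rw [hball]
  exact ((Measure.measurePreserving_sub_left μ x).integrableOn_comp_preimage
    (Homeomorph.subLeft x).measurableEmbedding).2 hzero

variable [NormedSpace ℝ E]

lemma integrableOn_smul_comp_polarCoord_symm {f : ℂ → E} (hf : Integrable f) :
    IntegrableOn (fun p : ℝ × ℝ => p.1 • f (Complex.polarCoord.symm p)) polarCoord.target := by
  have hprod : Integrable (fun p : ℝ × ℝ => f (Complex.measurableEquivRealProd.symm p)) :=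
    Complex.volume_preserving_equiv_real_prod.symm.integrable_comp_of_integrable hf
  rw [← integrableOn_univ] at hprod
  have h := (integrableOn_image_iff_integrableOn_abs_det_fderiv_smul volume
    polarCoord.open_target.measurableSet
    (fun p _ => (hasFDerivAt_polarCoord_symm p).hasFDerivWithinAt)
    polarCoord.symm.injOn _).1 (hprod.mono_set (subset_univ _))
  refine h.congr_fun (fun p hp => ?_) polarCoord.open_target.measurableSet
  have hp : 0 < p.1 := hp.1
  simp only [det_fderivPolarCoordSymm, abs_of_pos hp]
  rfl

lemma integral_eq_integral_circleAverage {f : ℂ → E} (hf : Integrable f) :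
    ∫ z, f z = ∫ r in Ioi (0 : ℝ), (2 * π * r) • circleAverage f 0 r := by
  have hcircle (r : ℝ) : ∫ θ in Ioo (-π) π, f (Complex.polarCoord.symm (r, θ))
      = (2 * π) • circleAverage f 0 r := by
    have hper : (fun θ => f (circleMap 0 r θ)).Periodic (2 * π) :=
      (periodic_circleMap 0 r).comp f
    have hshift := hper.intervalIntegral_add_eq (-π) 0
    rw [show -π + 2 * π = π by ring, zero_add,
      intervalIntegral.integral_of_le (by linarith [pi_pos]), integral_Ioc_eq_integral_Ioo]
      at hshift
    rw [circleAverage_def, smul_inv_smul₀ two_pi_pos.ne', ← hshift]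
    simp only [Complex.polarCoord_symm_apply, circleMap, Complex.exp_mul_I, zero_add,
      Complex.ofReal_cos, Complex.ofReal_sin]
  have hint := integrableOn_smul_comp_polarCoord_symm hf
  rw [← Complex.integral_comp_polarCoord_symm, polarCoord_target, Measure.volume_eq_prod,
    setIntegral_prod _ (by simpa only [polarCoord_target, Measure.volume_eq_prod] using hint)]
  refine setIntegral_congr_fun measurableSet_Ioi fun r _ => ?_
  simp only [integral_smul, hcircle, smul_smul, mul_comm]

lemma setIntegral_ball_eq_integral_circleAverage {f : ℂ → E} {R : ℝ}
    (hf : IntegrableOn f (ball 0 R)) :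
    ∫ z in ball 0 R, f z = ∫ r in Ioo 0 R, (2 * π * r) • circleAverage f 0 r := by
  have hcircle : ∀ r ∈ Ioi (0 : ℝ), (2 * π * r) • circleAverage ((ball 0 R).indicator f) 0 r
      = (Iio R).indicator (fun r => (2 * π * r) • circleAverage f 0 r) r := by
    intro r (hr : 0 < r)
    by_cases hrR : r < R
    · rw [indicator_of_mem (mem_Iio.2 hrR)]
      refine congrArg _ (circleAverage_congr_sphere fun z hz => indicator_of_mem ?_ f)
      rw [mem_sphere_zero_iff_norm, abs_of_pos hr] at hz
      rwa [mem_ball_zero_iff, hz]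
    · rw [indicator_of_notMem (notMem_Iio.2 (not_lt.1 hrR)),
        circleAverage_congr_sphere (f₂ := fun _ => 0),
        circleAverage_def, intervalIntegral.integral_zero, smul_zero, smul_zero]
      intro z hz
      rw [mem_sphere_zero_iff_norm, abs_of_pos hr] at hz
      exact indicator_of_notMem (by rwa [mem_ball_zero_iff, hz]) f
  rw [← integral_indicator measurableSet_ball,
    integral_eq_integral_circleAverage (hf.integrable_indicator measurableSet_ball),
    setIntegral_congr_fun measurableSet_Ioi hcircle, setIntegral_indicator measurableSet_Iio,
    Ioi_inter_Iio]

end Polar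

section Ellipse

/-- The vertical scaling `x + i y ↦ x + i b y` of the plane, written as a combination of the
identity and complex conjugation. -/
def verticalScale (b : ℝ) : ℂ →L[ℝ] ℂ :=
  ((1 + b) / 2) • ContinuousLinearMap.id ℝ ℂ + ((1 - b) / 2) • (Complex.conjCLE : ℂ →L[ℝ] ℂ)

/-- The open ellipse in `ℂ` with semi-axes `1` along the real axis and `b` along the imaginary
axis. -/
def openEllipse (b : ℝ) : Set ℂ := {w | w.re ^ 2 + (w.im / b) ^ 2 < 1}

/-- The logarithmic potential `∫_s log ‖z - w‖ dw` of a planar set of uniform density `1`. -/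
def logPotential (s : Set ℂ) (z : ℂ) : ℝ := ∫ w in s, Real.log ‖z - w‖

/-- The mean of `log ‖z - w‖` over the ellipse `verticalScale b '' sphere 0 r`, with respect to the
eccentric angle of `w`. -/
def shellPotential (b r : ℝ) (z : ℂ) : ℝ :=
  circleAverage (fun w => Real.log ‖z - verticalScale b w‖) 0 r

lemma verticalScale_apply (b : ℝ) (w : ℂ) :
    verticalScale b w = ((1 + b) / 2 : ℝ) * w + ((1 - b) / 2 : ℝ) * conj w := by
  simp [verticalScale]

lemma re_verticalScale (b : ℝ) (w : ℂ) : (verticalScale b w).re = w.re := by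
  rw [verticalScale_apply, Complex.add_re, Complex.re_ofReal_mul, Complex.re_ofReal_mul,
    Complex.conj_re]
  ring

lemma im_verticalScale (b : ℝ) (w : ℂ) : (verticalScale b w).im = b * w.im := by
  rw [verticalScale_apply, Complex.add_im, Complex.im_ofReal_mul, Complex.im_ofReal_mul,
    Complex.conj_im]
  ring

lemma det_verticalScale (b : ℝ) : (verticalScale b).det = b := by
  have hmatrix : LinearMap.toMatrix Complex.basisOneI Complex.basisOneI
      (verticalScale b : ℂ →ₗ[ℝ] ℂ) = !![1, 0; 0, b] := by
    ext i j
    fin_cases i <;> fin_cases j <;>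
      simp [LinearMap.toMatrix_apply, re_verticalScale, im_verticalScale]
  rw [ContinuousLinearMap.det, ← LinearMap.det_toMatrix Complex.basisOneI, hmatrix]
  simp

lemma injective_verticalScale {b : ℝ} (hb : b ≠ 0) : Function.Injective (verticalScale b) := by
  intro w w' h
  have hre := congrArg Complex.re h
  have him := congrArg Complex.im h
  rw [re_verticalScale, re_verticalScale] at hre
  rw [im_verticalScale, im_verticalScale] at him
  exact Complex.ext hre (mul_left_cancel₀ hb him)

lemma norm_sq_eq_re_sq_add_im_sq (w : ℂ) : ‖w‖ ^ 2 = w.re ^ 2 + w.im ^ 2 := by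
  rw [Complex.sq_norm, Complex.normSq_apply]
  ring

lemma image_verticalScale_ball {b : ℝ} (hb : b ≠ 0) :
    verticalScale b '' ball 0 1 = openEllipse b := by
  ext z
  simp only [mem_image, mem_ball_zero_iff, openEllipse, mem_ofPred_eq]
  constructor
  · rintro ⟨w, hw, rfl⟩
    rw [re_verticalScale, im_verticalScale, mul_div_cancel_left₀ _ hb,
      ← norm_sq_eq_re_sq_add_im_sq]
    nlinarith [norm_nonneg w]
  · intro hz
    refine ⟨⟨z.re, z.im / b⟩, ?_, ?_⟩
    · rw [← sq_lt_one_iff₀ (norm_nonneg _), norm_sq_eq_re_sq_add_im_sq]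
      exact hz
    · apply Complex.ext
      · rw [re_verticalScale]
      · rw [im_verticalScale, mul_div_cancel₀ _ hb]

lemma integrableOn_log_norm_sub_s5 {s : Set ℂ} (hs : Bornology.IsBounded s) (z : ℂ) :
    IntegrableOn (fun w => Real.log ‖z - w‖) s := by
  obtain ⟨R, hR⟩ := hs.subset_ball z
  exact (integrableOn_log_norm_sub_ball volume z R).mono_set hR

lemma logPotential_openEllipse {b : ℝ} (hb : 0 < b) (z : ℂ) :
    logPotential (openEllipse b) z
      = 2 * π * b * ∫ r in Ioo (0 : ℝ) 1, r * shellPotential b r z := by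
  have hderiv : ∀ w ∈ ball (0 : ℂ) 1,
      HasFDerivWithinAt (verticalScale b) (verticalScale b) (ball 0 1) w :=
    fun w _ => (verticalScale b).hasFDerivWithinAt
  have hinj : InjOn (verticalScale b) (ball 0 1) := (injective_verticalScale hb.ne').injOn
  have hint : IntegrableOn (fun w => b • Real.log ‖z - verticalScale b w‖) (ball 0 1) := by
    have hbdd := (verticalScale b).lipschitz.isBounded_image
      (isBounded_ball (x := (0 : ℂ)) (r := 1))
    have h := (integrableOn_image_iff_integrableOn_abs_det_fderiv_smul volume measurableSet_ball
      hderiv hinj _).1 (integrableOn_log_norm_sub_s5 hbdd z)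
    rwa [det_verticalScale, abs_of_pos hb] at h
  rw [logPotential, ← image_verticalScale_ball hb.ne',
    integral_image_eq_integral_abs_det_fderiv_smul volume measurableSet_ball hderiv hinj,
    det_verticalScale, abs_of_pos hb, setIntegral_ball_eq_integral_circleAverage hint]
  rw [← integral_const_mul]
  refine integral_congr_ae (.of_forall fun r => ?_)
  simp only [circleAverage_fun_smul, shellPotential]
  simp only [smul_eq_mul]
  ring

end Ellipse

section FocalSqrt

/-- The branch of `√(z ^ 2 - m)` that is asymptotic to `z` at infinity. It is holomorphic in `z` off
the segment joining the two square roots of `m`; at `z = 0` the formula gives the value `0`. -/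
def focalSqrt (m : ℝ) (z : ℂ) : ℂ := z * (1 - m / z ^ 2) ^ (2⁻¹ : ℂ)

/-- The root of larger modulus of `X ^ 2 - z * X + m / 4`, that is, the inverse Joukowski map. -/
def outerRoot (m : ℝ) (z : ℂ) : ℂ := (z + focalSqrt m z) / 2

/-- The root of smaller modulus of `X ^ 2 - z * X + m / 4`. -/
def innerRoot (m : ℝ) (z : ℂ) : ℂ := (z - focalSqrt m z) / 2

/-- For `0 ≤ m`, the segment between the foci `± √m`. -/
def focalSegment (m : ℝ) : Set ℂ := {z | z.im = 0 ∧ z.re ^ 2 ≤ m}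

lemma isClosed_focalSegment (m : ℝ) : IsClosed (focalSegment m) :=
  (isClosed_eq Complex.continuous_im continuous_const).inter
    (isClosed_le (Complex.continuous_re.pow 2) continuous_const)

lemma focalSegment_mono {m m' : ℝ} (h : m ≤ m') : focalSegment m ⊆ focalSegment m' :=
  fun _ hz => ⟨hz.1, hz.2.trans h⟩

lemma ne_zero_of_notMem_focalSegment {m : ℝ} (hm : 0 ≤ m) {z : ℂ} (hz : z ∉ focalSegment m) :
    z ≠ 0 := by
  rintro rfl
  exact hz (by simpa [focalSegment] using hm)

lemma focalSqrt_sq (m : ℝ) {z : ℂ} (hz : z ≠ 0) : focalSqrt m z ^ 2 = z ^ 2 - m := by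
  rw [focalSqrt, mul_pow]
  have hsq : ((1 - m / z ^ 2 : ℂ) ^ (2⁻¹ : ℂ)) ^ 2 = 1 - m / z ^ 2 := by
    simpa only [Nat.cast_ofNat] using Complex.cpow_nat_inv_pow (1 - m / z ^ 2) two_ne_zero
  rw [hsq]
  field_simp

lemma re_focalSqrt_mul_conj_nonneg (m : ℝ) (z : ℂ) : 0 ≤ (focalSqrt m z * conj z).re := by
  rw [focalSqrt, mul_right_comm, Complex.mul_conj, Complex.re_ofReal_mul, Complex.cpow_inv_two_re]
  exact mul_nonneg (Complex.normSq_nonneg z) (Real.sqrt_nonneg _)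

lemma norm_sub_focalSqrt_le (m : ℝ) (z : ℂ) : ‖z - focalSqrt m z‖ ≤ ‖z + focalSqrt m z‖ := by
  have h : 0 ≤ ⟪z, focalSqrt m z⟫_ℝ := re_focalSqrt_mul_conj_nonneg m z
  rw [← sq_le_sq₀ (norm_nonneg _) (norm_nonneg _), norm_sub_sq_real, norm_add_sq_real]
  linarith

lemma outerRoot_ne_zero (m : ℝ) {z : ℂ} (hz : z ≠ 0) : outerRoot m z ≠ 0 := by
  intro h
  have hq : focalSqrt m z = -z := by
    rw [outerRoot, div_eq_zero_iff, or_iff_left two_ne_zero] at h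
    exact eq_neg_of_add_eq_zero_right h
  have hre := re_focalSqrt_mul_conj_nonneg m z
  rw [hq, neg_mul, Complex.mul_conj, Complex.neg_re, Complex.ofReal_re] at hre
  linarith [Complex.normSq_pos.2 hz]

lemma outerRoot_add_innerRoot (m : ℝ) (z : ℂ) : outerRoot m z + innerRoot m z = z := by
  rw [outerRoot, innerRoot]
  ring

lemma outerRoot_mul_innerRoot (m : ℝ) {z : ℂ} (hz : z ≠ 0) :
    outerRoot m z * innerRoot m z = m / 4 := by
  rw [outerRoot, innerRoot]
  linear_combination (-1 / 4 : ℂ) * focalSqrt_sq m hz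

lemma norm_innerRoot_le_norm_outerRoot (m : ℝ) (z : ℂ) : ‖innerRoot m z‖ ≤ ‖outerRoot m z‖ := by
  rw [outerRoot, innerRoot, norm_div, norm_div]
  exact div_le_div_of_nonneg_right (norm_sub_focalSqrt_le m z) (norm_nonneg _)

lemma innerRoot_eq_mul_conj_outerRoot (m : ℝ) {z : ℂ} (hz : z ≠ 0) :
    innerRoot m z = (m / (4 * ‖outerRoot m z‖ ^ 2) : ℝ) * conj (outerRoot m z) := by
  have hF := outerRoot_ne_zero m hz
  have hnorm : (‖outerRoot m z‖ : ℂ) ≠ 0 := by exact_mod_cast norm_ne_zero_iff.2 hF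
  apply mul_left_cancel₀ hF
  rw [outerRoot_mul_innerRoot m hz, mul_left_comm, Complex.mul_conj']
  push_cast
  field_simp

lemma le_four_mul_norm_outerRoot_sq (m : ℝ) {z : ℂ} (hz : z ≠ 0) :
    m ≤ 4 * ‖outerRoot m z‖ ^ 2 := by
  have hprod : ‖outerRoot m z‖ * ‖innerRoot m z‖ = |m| / 4 := by
    rw [← norm_mul, outerRoot_mul_innerRoot m hz, norm_div, Complex.norm_real, Real.norm_eq_abs,
      Complex.norm_ofNat]
  nlinarith [le_abs_self m,
    mul_le_mul_of_nonneg_left (norm_innerRoot_le_norm_outerRoot m z) (norm_nonneg (outerRoot m z))]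

lemma outerRoot_add_of_norm_lt {m : ℝ} {f g : ℂ} (hfg : f * g = m / 4) (hlt : ‖g‖ < ‖f‖) :
    outerRoot m (f + g) = f := by
  have hz : f + g ≠ 0 := fun h =>
    hlt.ne (by rw [← norm_neg g, eq_neg_of_add_eq_zero_left h])
  have hsum := outerRoot_add_innerRoot m (f + g)
  have hroots : (outerRoot m (f + g) - f) * (outerRoot m (f + g) - g) = 0 := by
    linear_combination outerRoot m (f + g) * hsum - outerRoot_mul_innerRoot m hz + hfg
  refine sub_eq_zero.1 ((mul_eq_zero.1 hroots).resolve_right fun h => hlt.not_ge ?_)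
  have hF : outerRoot m (f + g) = g := sub_eq_zero.1 h
  have hG : innerRoot m (f + g) = f := by linear_combination hsum - hF
  simpa only [hF, hG] using norm_innerRoot_le_norm_outerRoot m (f + g)

lemma one_sub_div_sq_mem_slitPlane {m : ℝ} (hm : 0 ≤ m) {z : ℂ} (hz : z ∉ focalSegment m) :
    1 - m / z ^ 2 ∈ Complex.slitPlane := by
  have hz0 : z ^ 2 ≠ 0 := pow_ne_zero 2 (ne_zero_of_notMem_focalSegment hm hz)
  by_contra hslit
  rw [Complex.mem_slitPlane_iff, not_or, not_lt, not_not] at hslit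
  obtain ⟨hre, him⟩ := hslit
  set t : ℝ := 1 - (1 - m / z ^ 2 : ℂ).re with ht
  have hzt : z ^ 2 * t = m := by
    have hw : (1 - m / z ^ 2 : ℂ) = ((1 - m / z ^ 2 : ℂ).re : ℂ) := Complex.ext rfl (by simp [him])
    rw [ht, Complex.ofReal_sub, ← hw, Complex.ofReal_one, sub_sub_cancel, mul_div_cancel₀ _ hz0]
  have ht1 : 1 ≤ t := by linarith
  have hmre : (z.re ^ 2 - z.im ^ 2) * t = m := by
    simpa [sq] using congrArg Complex.re hzt
  have hmim : 2 * z.re * z.im * t = 0 := by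
    have h := congrArg Complex.im hzt
    simp only [sq, Complex.mul_im, Complex.ofReal_re, Complex.ofReal_im] at h
    linarith
  have him0 : z.im = 0 := by
    rcases eq_or_ne z.re 0 with h | h
    · rw [h] at hmre
      nlinarith
    · simpa [h, (zero_lt_one.trans_le ht1).ne'] using hmim
  refine hz ⟨him0, ?_⟩
  rw [him0] at hmre
  nlinarith

lemma sqrt_mem_focalSegment {m : ℝ} (hm : 0 ≤ m) : (√m : ℂ) ∈ focalSegment m := by
  simp [focalSegment, hm]

lemma neg_sqrt_mem_focalSegment {m : ℝ} (hm : 0 ≤ m) : (-√m : ℂ) ∈ focalSegment m := by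
  simp [focalSegment, hm]

lemma le_norm_focalSqrt {m δ : ℝ} (hm : 0 ≤ m) (hδ : 0 < δ) {z : ℂ}
    (hz : Disjoint (ball z δ) (focalSegment m)) : δ ≤ ‖focalSqrt m z‖ := by
  have hdist {w : ℂ} (hw : w ∈ focalSegment m) : δ ≤ ‖z - w‖ := by
    by_contra! h
    exact disjoint_left.1 hz (by rwa [mem_ball, dist_comm, dist_eq_norm]) hw
  have hz0 : z ≠ 0 :=
    ne_zero_of_notMem_focalSegment hm (disjoint_left.1 hz (mem_ball_self hδ))
  have hfactor : focalSqrt m z ^ 2 = (z - √m) * (z - -√m) := by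
    have hsqrt : (√m : ℂ) ^ 2 = m := by exact_mod_cast Real.sq_sqrt hm
    rw [focalSqrt_sq m hz0]
    linear_combination hsqrt
  have hsq : δ ^ 2 ≤ ‖focalSqrt m z‖ ^ 2 := by
    rw [← norm_pow, hfactor, norm_mul, sq]
    exact mul_le_mul (hdist (sqrt_mem_focalSegment hm)) (hdist (neg_sqrt_mem_focalSegment hm))
      hδ.le (norm_nonneg _)
  exact (sq_le_sq₀ hδ.le (norm_nonneg _)).1 hsq

lemma focalSqrt_ne_zero {m : ℝ} (hm : 0 ≤ m) {z : ℂ} (hz : z ∉ focalSegment m) :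
    focalSqrt m z ≠ 0 :=
  mul_ne_zero (ne_zero_of_notMem_focalSegment hm hz) fun h =>
    Complex.slitPlane_ne_zero (one_sub_div_sq_mem_slitPlane hm hz)
      ((Complex.cpow_eq_zero_iff _ _).1 h).1

lemma hasDerivAt_of_hasDerivAt_sq {𝕜 𝕂 : Type*} [NontriviallyNormedField 𝕜] [NormedField 𝕂]
    [NormedAlgebra 𝕜 𝕂] [NeZero (2 : 𝕂)] {f : 𝕜 → 𝕂} {d : 𝕂} {x : 𝕜} (hf : DifferentiableAt 𝕜 f x)
    (hsq : HasDerivAt (fun y => f y ^ 2) d x) (hx : f x ≠ 0) : HasDerivAt f (d / (2 * f x)) x := by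
  have hd : 2 * f x * deriv f x = d := by
    simpa using (hf.hasDerivAt.fun_pow 2).unique hsq
  refine hf.hasDerivAt.congr_deriv ?_
  rw [← hd, mul_div_cancel_left₀ _ (mul_ne_zero two_ne_zero hx)]

lemma hasDerivAt_focalSqrt {m : ℝ} (hm : 0 ≤ m) {z : ℂ} (hz : z ∉ focalSegment m) :
    HasDerivAt (focalSqrt m) (z / focalSqrt m z) z := by
  have hz0 := ne_zero_of_notMem_focalSegment hm hz
  have hslit := one_sub_div_sq_mem_slitPlane hm hz
  have hdiff : DifferentiableAt ℂ (focalSqrt m) z := by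
    unfold focalSqrt
    fun_prop (disch := first | assumption | exact pow_ne_zero 2 hz0)
  have hsq : HasDerivAt (fun w => focalSqrt m w ^ 2) (2 * z) z := by
    have h : HasDerivAt (fun w : ℂ => w ^ 2 - m) (2 * z) z := by
      simpa using (hasDerivAt_pow 2 z).sub_const (m : ℂ)
    exact h.congr_of_eventuallyEq ((eventually_ne_nhds hz0).mono fun w hw => focalSqrt_sq m hw)
  have h := hasDerivAt_of_hasDerivAt_sq hdiff hsq (focalSqrt_ne_zero hm hz)
  rwa [mul_div_mul_left _ _ two_ne_zero] at h

lemma hasDerivAt_focalSqrt_left {m : ℝ} (hm : 0 ≤ m) {z : ℂ} (hz : z ∉ focalSegment m) :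
    HasDerivAt (fun m => focalSqrt m z) (-1 / (2 * focalSqrt m z)) m := by
  have hz0 := ne_zero_of_notMem_focalSegment hm hz
  have hslit := one_sub_div_sq_mem_slitPlane hm hz
  have hdiff : DifferentiableAt ℂ (fun c : ℂ => z * (1 - c / z ^ 2) ^ (2⁻¹ : ℂ)) m := by
    fun_prop (disch := assumption)
  have hsq : HasDerivAt (fun m => focalSqrt m z ^ 2) (-1) m := by
    simp only [focalSqrt_sq _ hz0]
    simpa using (hasDerivAt_id m).ofReal_comp.const_sub (z ^ 2)
  exact hasDerivAt_of_hasDerivAt_sq hdiff.hasDerivAt.comp_ofReal.differentiableAt hsq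
    (focalSqrt_ne_zero hm hz)

lemma hasDerivAt_outerRoot {m : ℝ} (hm : 0 ≤ m) {z : ℂ} (hz : z ∉ focalSegment m) :
    HasDerivAt (outerRoot m) (outerRoot m z / focalSqrt m z) z := by
  refine (((hasDerivAt_id z).add (hasDerivAt_focalSqrt hm hz)).div_const 2).congr_deriv ?_
  have hq := focalSqrt_ne_zero hm hz
  rw [outerRoot]
  field_simp
  ring

lemma hasGradientAt_log_norm_outerRoot {m : ℝ} (hm : 0 ≤ m) {z : ℂ} (hz : z ∉ focalSegment m) :
    HasGradientAt (fun w => Real.log ‖outerRoot m w‖) (conj (focalSqrt m z)⁻¹) z := by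
  have hF := outerRoot_ne_zero m (ne_zero_of_notMem_focalSegment hm hz)
  convert hasGradientAt_log_norm (hasDerivAt_outerRoot hm hz) hF using 2
  field_simp

lemma lipschitzOnWith_log_norm_outerRoot {m : ℝ} (hm : 0 ≤ m) {z : ℂ} {δ : ℝ≥0} (hδ : 0 < δ)
    (hz : Disjoint (ball z (2 * δ)) (focalSegment m)) :
    LipschitzOnWith δ⁻¹ (fun w => Real.log ‖outerRoot m w‖) (ball z δ) := by
  have hdisj : ∀ w ∈ ball z δ, Disjoint (ball w δ) (focalSegment m) := fun w hw =>
    hz.mono_left (ball_subset_ball' (by linarith [mem_ball.1 hw]))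
  refine (convex_ball z δ).lipschitzOnWith_of_nnnorm_hasFDerivWithin_le (𝕜 := ℝ)
    (fun w hw => (hasGradientAt_log_norm_outerRoot hm
      (disjoint_left.1 (hdisj w hw) (mem_ball_self hδ))).hasFDerivAt.hasFDerivWithinAt)
    fun w hw => ?_
  rw [LinearIsometryEquiv.nnnorm_map, ← NNReal.coe_le_coe, coe_nnnorm, RCLike.norm_conj, norm_inv,
    NNReal.coe_inv]
  exact inv_anti₀ hδ (le_norm_focalSqrt hm hδ (hdisj w hw))

end FocalSqrt

section AngularMean

lemma log_norm_add_sub_of_norm_eq {a r : ℝ} (ha : 0 < a) (hr : 0 < r) {β f g w : ℂ}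
    (hfg : f * g = a * β * r ^ 2) (hw : ‖w‖ = r) (hf : w ≠ f / a) (hg : w ≠ g / a) :
    Real.log ‖f + g - (a * w + β * conj w)‖
      = Real.log a - Real.log r + (Real.log ‖w - f / a‖ + Real.log ‖w - g / a‖) := by
  have ha0 : (a : ℂ) ≠ 0 := by exact_mod_cast ha.ne'
  have hw0 : w ≠ 0 := norm_pos_iff.1 (hw ▸ hr)
  have hconj : w * conj w = r ^ 2 := by rw [Complex.mul_conj', hw]
  have hfactor : f + g - (a * w + β * conj w) = -(a / w * ((w - f / a) * (w - g / a))) := by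
    field_simp
    linear_combination -a * β * hconj + hfg
  rw [hfactor, norm_neg, norm_mul, norm_mul, norm_div, hw, Complex.norm_of_nonneg ha.le,
    Real.log_mul (by positivity) (mul_ne_zero (norm_ne_zero_iff.2 (sub_ne_zero.2 hf))
      (norm_ne_zero_iff.2 (sub_ne_zero.2 hg))), Real.log_div ha.ne' hr.ne',
    Real.log_mul (norm_ne_zero_iff.2 (sub_ne_zero.2 hf)) (norm_ne_zero_iff.2 (sub_ne_zero.2 hg))]

lemma circleAverage_log_norm_sub_const {r : ℝ} (hr : 0 < r) (p : ℂ) :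
    circleAverage (fun w => Real.log ‖w - p‖) 0 r = Real.log r + log⁺ (‖p‖ / r) := by
  rw [circleAverage_log_norm_sub_const_eq_log_radius_add_posLog hr.ne', zero_sub, norm_neg,
    inv_mul_eq_div]

lemma circleAverage_log_norm_sub_ellipse {a r : ℝ} (ha : 0 < a) (hr : 0 < r) {β f g : ℂ}
    (hf : f ≠ 0) (hfg : f * g = a * β * r ^ 2) (hg : ‖g‖ ≤ a * r) :
    circleAverage (fun w => Real.log ‖f + g - (a * w + β * conj w)‖) 0 r
      = max (Real.log (a * r)) (Real.log ‖f‖) := by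
  have hint (p : ℂ) : CircleIntegrable (fun w => Real.log ‖w - p‖) 0 r :=
    circleIntegrable_log_norm_sub_const r
  have hsplit : circleAverage (fun w => Real.log ‖f + g - (a * w + β * conj w)‖) 0 r
      = circleAverage (fun w =>
          Real.log a - Real.log r + (Real.log ‖w - f / a‖ + Real.log ‖w - g / a‖)) 0 r := by
    refine circleAverage_congr_codiscreteWithin ?_ hr.ne'
    filter_upwards [self_mem_codiscreteWithin _, compl_singleton_mem_codiscreteWithin (f / a : ℂ),
      compl_singleton_mem_codiscreteWithin (g / a : ℂ)] with w hw hwf hwg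
    rw [mem_sphere_zero_iff_norm, abs_of_pos hr] at hw
    exact log_norm_add_sub_of_norm_eq ha hr hfg hw hwf hwg
  have hposg : log⁺ (‖g / a‖ / r) = 0 := by
    rw [posLog_eq_zero_iff, abs_of_nonneg (by positivity), norm_div, Complex.norm_of_nonneg ha.le,
      div_div]
    exact div_le_one_of_le₀ hg (by positivity)
  have hposf : log⁺ (‖f / a‖ / r) = max 0 (Real.log ‖f‖ - Real.log (a * r)) := by
    rw [posLog_apply, norm_div, Complex.norm_of_nonneg ha.le, div_div,
      Real.log_div (norm_ne_zero_iff.2 hf) (by positivity)]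
  rw [hsplit, circleAverage_fun_add (circleIntegrable_const _ _ _) ((hint _).fun_add (hint _)),
    circleAverage_fun_add (hint _) (hint _), circleAverage_const,
    circleAverage_log_norm_sub_const hr, circleAverage_log_norm_sub_const hr, hposg, hposf]
  calc Real.log a - Real.log r
        + (Real.log r + max 0 (Real.log ‖f‖ - Real.log (a * r)) + (Real.log r + 0))
      = max 0 (Real.log ‖f‖ - Real.log (a * r)) + Real.log (a * r) := by
        rw [Real.log_mul ha.ne' hr.ne']
        ring
    _ = max (Real.log (a * r)) (Real.log ‖f‖) := by
        rw [← max_add_add_right, zero_add, sub_add_cancel]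

lemma shellPotential_eq_max {b r : ℝ} (hb : 0 < b) (hr : 0 < r) {z : ℂ}
    (hz : z ≠ 0) :
    shellPotential b r z
      = max (Real.log ((1 + b) / 2 * r)) (Real.log ‖outerRoot (r ^ 2 * (1 - b ^ 2)) z‖) := by
  set m := r ^ 2 * (1 - b ^ 2) with hm
  have hfg : outerRoot m z * innerRoot m z = ((1 + b) / 2 : ℝ) * ((1 - b) / 2 : ℝ) * r ^ 2 := by
    rw [outerRoot_mul_innerRoot m hz, hm]
    push_cast
    ring
  have hg : ‖innerRoot m z‖ ≤ (1 + b) / 2 * r := by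
    have hnorm : ‖outerRoot m z‖ * ‖innerRoot m z‖ = r ^ 2 * |1 - b ^ 2| / 4 := by
      rw [← norm_mul, outerRoot_mul_innerRoot m hz, norm_div, Complex.norm_real, Real.norm_eq_abs,
        hm, abs_mul, abs_of_nonneg (sq_nonneg r), Complex.norm_ofNat]
    have habs : |1 - b ^ 2| ≤ (1 + b) ^ 2 := abs_le.2 ⟨by nlinarith, by nlinarith⟩
    refine (sq_le_sq₀ (norm_nonneg _) (by positivity)).1 ?_
    calc ‖innerRoot m z‖ ^ 2
        ≤ ‖outerRoot m z‖ * ‖innerRoot m z‖ := by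
          rw [sq]
          exact mul_le_mul_of_nonneg_right (norm_innerRoot_le_norm_outerRoot m z) (norm_nonneg _)
      _ ≤ r ^ 2 * (1 + b) ^ 2 / 4 := by
          rw [hnorm]
          gcongr
      _ = ((1 + b) / 2 * r) ^ 2 := by ring
  have h := circleAverage_log_norm_sub_ellipse (by positivity) hr (outerRoot_ne_zero m hz) hfg hg
  simpa only [shellPotential, outerRoot_add_innerRoot, ← verticalScale_apply] using h

end AngularMean

section ExteriorGradient

lemma notMem_focalSegment_of_notMem_openEllipse {b : ℝ} (hb : b ≠ 0) {z : ℂ}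
    (hz : z ∉ openEllipse b) : z ∉ focalSegment (1 - b ^ 2) := by
  rintro ⟨him, hre⟩
  refine hz ?_
  have hb2 : 0 < b ^ 2 := by positivity
  simp only [openEllipse, mem_ofPred_eq, him, zero_div]
  linarith

lemma re_sq_add_im_sq_le_of_eq_add_mul_conj {b r κ : ℝ} (hb : 0 < b) {f z : ℂ} (hf : f ≠ 0)
    (hz : z = f + κ * conj f) (hκ₀ : 0 ≤ κ) (hκ₁ : κ ≤ 1) (hre : (1 + κ) * ‖f‖ ≤ r)
    (him : (1 - κ) * ‖f‖ ≤ b * r) : z.re ^ 2 + (z.im / b) ^ 2 ≤ r ^ 2 := by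
  have hρ : 0 < ‖f‖ := norm_pos_iff.2 hf
  have hzre : z.re = (1 + κ) * f.re := by
    rw [hz, Complex.add_re, Complex.re_ofReal_mul, Complex.conj_re]
    ring
  have hzim : z.im = (1 - κ) * f.im := by
    rw [hz, Complex.add_im, Complex.im_ofReal_mul, Complex.conj_im]
    ring
  have hmajor : (1 + κ) ^ 2 * ‖f‖ ^ 2 ≤ r ^ 2 := by
    rw [← mul_pow]
    exact pow_le_pow_left₀ (by positivity) hre 2
  have hminor : ((1 - κ) / b) ^ 2 * ‖f‖ ^ 2 ≤ r ^ 2 := by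
    rw [← mul_pow, div_mul_eq_mul_div]
    refine pow_le_pow_left₀ (by have := sub_nonneg.2 hκ₁; positivity) ?_ 2
    rwa [div_le_iff₀' hb]
  refine le_of_mul_le_mul_right ?_ (pow_pos hρ 2)
  calc (z.re ^ 2 + (z.im / b) ^ 2) * ‖f‖ ^ 2
      = (1 + κ) ^ 2 * ‖f‖ ^ 2 * f.re ^ 2 + ((1 - κ) / b) ^ 2 * ‖f‖ ^ 2 * f.im ^ 2 := by
        rw [hzre, hzim]
        ring
    _ ≤ r ^ 2 * f.re ^ 2 + r ^ 2 * f.im ^ 2 := by gcongr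
    _ = r ^ 2 * ‖f‖ ^ 2 := by rw [norm_sq_eq_re_sq_add_im_sq]; ring

lemma lt_norm_outerRoot {b r : ℝ} (hb : 0 < b) (hb₁ : b ≤ 1) {z : ℂ} (hz : z ≠ 0)
    (hzr : r ^ 2 < z.re ^ 2 + (z.im / b) ^ 2) :
    (1 + b) / 2 * r < ‖outerRoot (r ^ 2 * (1 - b ^ 2)) z‖ := by
  by_contra! hle
  set m := r ^ 2 * (1 - b ^ 2)
  set f := outerRoot m z
  have hρ : 0 < ‖f‖ := norm_pos_iff.2 (outerRoot_ne_zero m hz)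
  have hr : 0 < r := pos_of_mul_pos_right (hρ.trans_le hle) (by positivity)
  have hm₀ : 0 ≤ m := mul_nonneg (sq_nonneg r) (by nlinarith)
  have hmf : m ≤ 4 * ‖f‖ ^ 2 := le_four_mul_norm_outerRoot_sq m hz
  set κ : ℝ := m / (4 * ‖f‖ ^ 2)
  have hκ : κ * ‖f‖ * ‖f‖ = m / 4 := by
    have h : κ * (4 * ‖f‖ ^ 2) = m := div_mul_cancel₀ _ (by positivity)
    linear_combination h / 4
  have hβ : (1 - b) / 2 * r ≤ ‖f‖ := by
    refine (le_abs_self _).trans (abs_le_of_sq_le_sq ?_ hρ.le)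
    nlinarith [mul_nonneg (mul_nonneg hb.le (sub_nonneg.2 hb₁)) (sq_nonneg r)]
  have hmajor : (1 + κ) * ‖f‖ ≤ r := by
    refine le_of_mul_le_mul_right ?_ hρ
    nlinarith [mul_nonneg (sub_nonneg.2 hle) (sub_nonneg.2 hβ)]
  have hminor : (1 - κ) * ‖f‖ ≤ b * r := by
    refine le_of_mul_le_mul_right ?_ hρ
    nlinarith [mul_nonneg (sub_nonneg.2 hle)
      (add_nonneg hρ.le (mul_nonneg (sub_nonneg.2 hb₁) hr.le))]
  refine hzr.not_ge (re_sq_add_im_sq_le_of_eq_add_mul_conj hb (norm_pos_iff.1 hρ) ?_ (by positivity)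
    (div_le_one_of_le₀ hmf (by positivity)) hmajor hminor)
  rw [← innerRoot_eq_mul_conj_outerRoot m hz, outerRoot_add_innerRoot]

lemma hasDerivAt_outerRoot_sq_mul {m r : ℝ} (hm : 0 ≤ r ^ 2 * m) {z : ℂ}
    (hz : z ∉ focalSegment (r ^ 2 * m)) :
    HasDerivAt (fun t => outerRoot (t ^ 2 * m) z) (-(r * m) / (2 * focalSqrt (r ^ 2 * m) z)) r := by
  have hsq : HasDerivAt (fun t : ℝ => t ^ 2 * m) (2 * r * m) r := by
    simpa using (hasDerivAt_pow 2 r).mul_const m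
  refine (((hasDerivAt_focalSqrt_left hm hz).scomp r hsq).const_add z |>.div_const 2).congr_deriv ?_
  rw [Complex.real_smul]
  push_cast
  ring

lemma hasDerivAt_sq_div_outerRoot {m r : ℝ} (hm : 0 ≤ r ^ 2 * m) {z : ℂ}
    (hz : z ∉ focalSegment (r ^ 2 * m)) :
    HasDerivAt (fun t : ℝ => (t ^ 2 / 2 : ℂ) / outerRoot (t ^ 2 * m) z)
      (r * (focalSqrt (r ^ 2 * m) z)⁻¹) r := by
  have hz₀ := ne_zero_of_notMem_focalSegment hm hz
  have hq := focalSqrt_ne_zero hm hz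
  have hF := outerRoot_ne_zero (r ^ 2 * m) hz₀
  have hsq : HasDerivAt (fun t : ℝ => (t ^ 2 / 2 : ℂ)) r r := by
    simpa using ((hasDerivAt_id r).ofReal_comp.fun_pow 2).div_const 2
  refine (hsq.fun_div (hasDerivAt_outerRoot_sq_mul hm hz) hF).congr_deriv ?_
  have hF_def : 2 * outerRoot (r ^ 2 * m) z = z + focalSqrt (r ^ 2 * m) z :=
    mul_div_cancel₀ _ two_ne_zero
  have hq_sq := focalSqrt_sq (r ^ 2 * m) hz₀
  push_cast at hq_sq
  field_simp
  linear_combination (r : ℂ) * hq_sq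
    - (r : ℂ) * (2 * outerRoot (r ^ 2 * m) z - focalSqrt (r ^ 2 * m) z + z) * hF_def

lemma notMem_focalSegment_sq_mul {m r : ℝ} (hm : 0 ≤ m) (hr : r ∈ Icc (0 : ℝ) 1) {z : ℂ}
    (hz : z ∉ focalSegment m) : z ∉ focalSegment (r ^ 2 * m) :=
  fun h => hz (focalSegment_mono (mul_le_of_le_one_left hm (pow_le_one₀ hr.1 hr.2)) h)

lemma continuousOn_focalSqrt_sq_mul {m : ℝ} (hm : 0 ≤ m) {z : ℂ} (hz : z ∉ focalSegment m) :
    ContinuousOn (fun r => focalSqrt (r ^ 2 * m) z) (Icc 0 1) := fun r hr =>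
  ((hasDerivAt_focalSqrt_left (by positivity)
    (notMem_focalSegment_sq_mul hm hr hz)).continuousAt.comp_of_eq
    (f := fun t : ℝ => t ^ 2 * m) (by fun_prop) rfl).continuousWithinAt

lemma continuousOn_smul_conj_inv_focalSqrt {m : ℝ} (hm : 0 ≤ m) {z : ℂ}
    (hz : z ∉ focalSegment m) :
    ContinuousOn (fun r : ℝ => r • conj (focalSqrt (r ^ 2 * m) z)⁻¹) (Icc 0 1) :=
  continuousOn_id.smul (Complex.continuous_conj.comp_continuousOn
    ((continuousOn_focalSqrt_sq_mul hm hz).inv₀ fun _ hr =>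
      focalSqrt_ne_zero (by positivity) (notMem_focalSegment_sq_mul hm hr hz)))

lemma integral_mul_inv_focalSqrt {m : ℝ} (hm : 0 ≤ m) {z : ℂ} (hz : z ∉ focalSegment m) :
    ∫ r in Ioo (0 : ℝ) 1, r * (focalSqrt (r ^ 2 * m) z)⁻¹ = (2 * outerRoot m z)⁻¹ := by
  have hcont : ContinuousOn (fun r : ℝ => r * (focalSqrt (r ^ 2 * m) z)⁻¹) (uIcc 0 1) := by
    rw [uIcc_of_le zero_le_one]
    exact Complex.continuous_ofReal.continuousOn.mul
      ((continuousOn_focalSqrt_sq_mul hm hz).inv₀ fun _ hr =>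
        focalSqrt_ne_zero (by positivity) (notMem_focalSegment_sq_mul hm hr hz))
  rw [← integral_Ioc_eq_integral_Ioo, ← intervalIntegral.integral_of_le zero_le_one,
    intervalIntegral.integral_eq_sub_of_hasDerivAt (fun r hr => hasDerivAt_sq_div_outerRoot
      (by positivity) (notMem_focalSegment_sq_mul hm (uIcc_of_le (zero_le_one' ℝ) ▸ hr) hz))
      hcont.intervalIntegrable]
  simp [div_eq_mul_inv, mul_comm]

lemma ne_zero_of_notMem_openEllipse {b : ℝ} {z : ℂ} (hz : z ∉ openEllipse b) : z ≠ 0 := by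
  rintro rfl
  simp [openEllipse] at hz

lemma log_lt_log_norm_outerRoot {b r : ℝ} (hb : 0 < b) (hb₁ : b ≤ 1) (hr : r ∈ Ioo (0 : ℝ) 1)
    {z : ℂ} (hz : z ∉ openEllipse b) :
    Real.log ((1 + b) / 2 * r) < Real.log ‖outerRoot (r ^ 2 * (1 - b ^ 2)) z‖ :=
  Real.log_lt_log (mul_pos (by positivity) hr.1) <|
    lt_norm_outerRoot hb hb₁ (ne_zero_of_notMem_openEllipse hz) <|
      (pow_lt_one₀ hr.1.le hr.2 two_ne_zero).trans_le (not_lt.1 hz)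

lemma shellPotential_eq_log {b r : ℝ} (hb : 0 < b) (hb₁ : b ≤ 1) (hr : r ∈ Ioo (0 : ℝ) 1) {z : ℂ}
    (hz : z ∉ openEllipse b) :
    shellPotential b r z = Real.log ‖outerRoot (r ^ 2 * (1 - b ^ 2)) z‖ := by
  rw [shellPotential_eq_max hb hr.1 (ne_zero_of_notMem_openEllipse hz),
    max_eq_right (log_lt_log_norm_outerRoot hb hb₁ hr hz).le]

lemma hasGradientAt_shellPotential {b r : ℝ} (hb : 0 < b) (hb₁ : b ≤ 1) (hr : r ∈ Ioo (0 : ℝ) 1)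
    {z : ℂ} (hz : z ∉ openEllipse b) :
    HasGradientAt (shellPotential b r) (conj (focalSqrt (r ^ 2 * (1 - b ^ 2)) z)⁻¹) z := by
  have hm : 0 ≤ 1 - b ^ 2 := by nlinarith
  have hseg := notMem_focalSegment_sq_mul hm (Ioo_subset_Icc_self hr)
    (notMem_focalSegment_of_notMem_openEllipse hb.ne' hz)
  refine (hasGradientAt_max_of_lt (hasGradientAt_log_norm_outerRoot (by positivity) hseg)
    (log_lt_log_norm_outerRoot hb hb₁ hr hz)).congr_of_eventuallyEq ?_
  filter_upwards [eventually_ne_nhds (ne_zero_of_notMem_openEllipse hz)] with w hw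
  exact shellPotential_eq_max hb hr.1 hw

lemma lipschitzOnWith_shellPotential {b r : ℝ} (hb : 0 < b) (hb₁ : b ≤ 1)
    (hr : r ∈ Ioo (0 : ℝ) 1) {z : ℂ} {δ : ℝ≥0} (hδ : 0 < δ)
    (hz : Disjoint (ball z (2 * δ)) (focalSegment (1 - b ^ 2))) :
    LipschitzOnWith δ⁻¹ (shellPotential b r) (ball z δ) := by
  have hm : 0 ≤ 1 - b ^ 2 := by nlinarith
  have heq : ∀ w ∈ ball z δ, shellPotential b r w
      = max (Real.log ((1 + b) / 2 * r)) (Real.log ‖outerRoot (r ^ 2 * (1 - b ^ 2)) w‖) :=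
    fun w hw => shellPotential_eq_max hb hr.1 <| ne_zero_of_notMem_focalSegment hm <|
      disjoint_left.1 hz (ball_subset_ball (by linarith [δ.coe_nonneg]) hw)
  have hlip := (LipschitzWith.id.const_max (Real.log ((1 + b) / 2 * r))).comp_lipschitzOnWith
    (lipschitzOnWith_log_norm_outerRoot (m := r ^ 2 * (1 - b ^ 2)) (by positivity) hδ
      (hz.mono_right (focalSegment_mono (mul_le_of_le_one_left hm (pow_le_one₀ hr.1.le hr.2.le)))))
  intro w hw w' hw'
  rw [heq w hw, heq w' hw']
  simpa only [one_mul, Function.comp_apply, id] using hlip hw hw'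

lemma measurable_shellPotential (b : ℝ) (z : ℂ) : Measurable fun r => shellPotential b r z := by
  have hmeas : Measurable fun p : ℝ × ℝ =>
      Real.log ‖z - verticalScale b (circleMap 0 p.1 p.2)‖ := by
    unfold circleMap
    fun_prop
  simp only [shellPotential, circleAverage_def, intervalIntegral.integral_of_le two_pi_pos.le]
  exact (hmeas.stronglyMeasurable.integral_prod_right'
    (ν := volume.restrict (Ioc 0 (2 * π)))).measurable.const_smul (2 * π)⁻¹

lemma integrableOn_mul_shellPotential {b : ℝ} (hb : 0 < b) (hb₁ : b ≤ 1) {z : ℂ}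
    (hz : z ∉ openEllipse b) :
    IntegrableOn (fun r => r * shellPotential b r z) (Ioo 0 1) := by
  have hm : 0 ≤ 1 - b ^ 2 := by nlinarith
  have hseg := notMem_focalSegment_of_notMem_openEllipse hb.ne' hz
  have hcont : ContinuousOn
      (fun r => r * Real.log ‖outerRoot (r ^ 2 * (1 - b ^ 2)) z‖) (Icc 0 1) :=
    continuousOn_id.mul (ContinuousOn.log
      ((continuousOn_const.add (continuousOn_focalSqrt_sq_mul hm hseg)).div_const 2).norm
      fun r _ => norm_ne_zero_iff.2 (outerRoot_ne_zero _ (ne_zero_of_notMem_openEllipse hz)))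
  refine (hcont.integrableOn_Icc.mono_set Ioo_subset_Icc_self).congr_fun (fun r hr => ?_)
    measurableSet_Ioo
  simp only [shellPotential_eq_log hb hb₁ hr hz]

lemma exists_disjoint_ball_focalSegment {m : ℝ} {z : ℂ} (hz : z ∉ focalSegment m) :
    ∃ δ : ℝ≥0, 0 < δ ∧ Disjoint (ball z (2 * δ)) (focalSegment m) := by
  obtain ⟨ε, hε, hball⟩ := Metric.isOpen_iff.1 (isClosed_focalSegment m).isOpen_compl z hz
  lift ε to ℝ≥0 using hε.le
  refine ⟨ε / 2, half_pos (NNReal.coe_pos.1 hε), ?_⟩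
  rw [← subset_compl_iff_disjoint_right, NNReal.coe_div, NNReal.coe_two,
    mul_div_cancel₀ _ two_ne_zero]
  exact hball

lemma hasGradientAt_integral_mul_shellPotential {b : ℝ} (hb : 0 < b) (hb₁ : b ≤ 1) {z : ℂ}
    (hz : z ∉ openEllipse b) :
    HasGradientAt (fun w => ∫ r in Ioo (0 : ℝ) 1, r * shellPotential b r w)
      (conj (2 * outerRoot (1 - b ^ 2) z)⁻¹) z := by
  have hm : 0 ≤ 1 - b ^ 2 := by nlinarith
  have hseg := notMem_focalSegment_of_notMem_openEllipse hb.ne' hz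
  obtain ⟨δ, hδ, hdisj⟩ := exists_disjoint_ball_focalSegment hseg
  have hgrad : conj (2 * outerRoot (1 - b ^ 2) z)⁻¹
      = ∫ r in Ioo (0 : ℝ) 1, r • conj (focalSqrt (r ^ 2 * (1 - b ^ 2)) z)⁻¹ := by
    rw [← integral_mul_inv_focalSqrt hm hseg, ← integral_conj]
    simp only [map_mul, Complex.conj_ofReal, Complex.real_smul]
  rw [hgrad]
  refine hasGradientAt_integral_of_dominated_loc_of_lip (bound := fun r => r * (δ : ℝ)⁻¹)
    (ball_mem_nhds z hδ)
    (.of_forall fun w => (measurable_id.mul (measurable_shellPotential b w)).aestronglyMeasurable)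
    (integrableOn_mul_shellPotential hb hb₁ hz)
    ((continuousOn_smul_conj_inv_focalSqrt hm hseg).mono Ioo_subset_Icc_self
      |>.aestronglyMeasurable measurableSet_Ioo) ?_ ?_ ?_
  · filter_upwards [ae_restrict_mem measurableSet_Ioo] with r hr
    have h := (lipschitzWith_smul r).comp_lipschitzOnWith
      (lipschitzOnWith_shellPotential hb hb₁ hr hδ hdisj)
    have hbound : Real.nnabs (r * (δ : ℝ)⁻¹) = ‖r‖₊ * δ⁻¹ := by
      ext
      simp
    rwa [hbound]
  · exact ((continuous_mul_const _).continuousOn.integrableOn_Icc).mono_set Ioo_subset_Icc_self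
  · filter_upwards [ae_restrict_mem measurableSet_Ioo] with r hr
    exact hasGradientAt_const_mul r (hasGradientAt_shellPotential hb hb₁ hr hz)

lemma hasGradientAt_logPotential_openEllipse {b : ℝ} (hb : 0 < b) (hb₁ : b ≤ 1) {z : ℂ}
    (hz : z ∉ openEllipse b) :
    HasGradientAt (logPotential (openEllipse b))
      ((π * b) • conj (outerRoot (1 - b ^ 2) z)⁻¹) z := by
  rw [funext (logPotential_openEllipse hb)]
  convert hasGradientAt_const_mul (2 * π * b) (hasGradientAt_integral_mul_shellPotential hb hb₁ hz)
    using 1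
  simp only [mul_inv, map_mul, map_inv₀, map_ofNat, Complex.real_smul]
  push_cast
  ring

lemma outerRoot_verticalScale {b : ℝ} (hb : 0 < b) {u : ℂ} (hu : ‖u‖ = 1) :
    outerRoot (1 - b ^ 2) (verticalScale b u) = ((1 + b) / 2 : ℝ) * u := by
  rw [verticalScale_apply]
  refine outerRoot_add_of_norm_lt ?_ ?_
  · have hconj : u * conj u = 1 := by simp [Complex.mul_conj', hu]
    push_cast
    linear_combination (1 - b ^ 2) / 4 * hconj
  · rw [norm_mul, norm_mul, RCLike.norm_conj, hu, Complex.norm_real, Complex.norm_real, mul_one,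
      mul_one, Real.norm_eq_abs, Real.norm_of_nonneg (by positivity)]
    exact abs_lt.2 ⟨by linarith, by linarith⟩

lemma verticalScale_notMem_openEllipse {b : ℝ} (hb : b ≠ 0) {u : ℂ} (hu : ‖u‖ = 1) :
    verticalScale b u ∉ openEllipse b := by
  simp [openEllipse, re_verticalScale, im_verticalScale, hb, ← norm_sq_eq_re_sq_add_im_sq, hu]

lemma hasGradientAt_logPotential_openEllipse_verticalScale {b : ℝ} (hb : 0 < b) (hb₁ : b ≤ 1)
    {u : ℂ} (hu : ‖u‖ = 1) :
    HasGradientAt (logPotential (openEllipse b)) ((2 * π * (b / (1 + b))) • u)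
      (verticalScale b u) := by
  have hu₀ : u ≠ 0 := norm_ne_zero_iff.1 (hu ▸ one_ne_zero)
  have hconj : conj u⁻¹ = u := by
    rw [map_inv₀, inv_eq_of_mul_eq_one_left]
    simp [Complex.mul_conj', hu]
  convert hasGradientAt_logPotential_openEllipse hb hb₁
    (verticalScale_notMem_openEllipse hb.ne' hu) using 1
  have hb₂ : (1 + b : ℂ) ≠ 0 := by exact_mod_cast (by positivity : (1 + b : ℝ) ≠ 0)
  rw [outerRoot_verticalScale hb hu, mul_inv, map_mul, hconj, map_inv₀, Complex.conj_ofReal,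
    Complex.real_smul, Complex.real_smul]
  push_cast
  field_simp

end ExteriorGradient

section KirchhoffVortex

/-- The isometric identification of the Euclidean plane with `ℂ`. -/
def toComplex : Pt ≃ₗᵢ[ℝ] ℂ := Complex.orthonormalBasisOneI.repr.symm

lemma re_toComplex (x : Pt) : (toComplex x).re = x 0 := by
  simp [toComplex, Complex.orthonormalBasisOneI_repr_symm_apply]

lemma im_toComplex (x : Pt) : (toComplex x).im = x 1 := by
  simp [toComplex, Complex.orthonormalBasisOneI_repr_symm_apply]

lemma toComplex_pt (a b : ℝ) : toComplex (pt a b) = ⟨a, b⟩ :=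
  Complex.ext (re_toComplex _) (im_toComplex _)

lemma Ψell_eq_logPotential (ξ : ℝ) (x : Pt) :
    Ψell ξ x = 1 / (2 * π) * logPotential (openEllipse (Real.tanh ξ)) (toComplex x)
      - Ωell ξ * (‖x‖ ^ 2 / 2) := by
  have hpre : Eell ξ = toComplex ⁻¹' openEllipse (Real.tanh ξ) := by
    ext y
    simp [Eell, openEllipse, re_toComplex, im_toComplex]
  have hpot : ∫ y in Eell ξ, Real.log ‖x - y‖
      = logPotential (openEllipse (Real.tanh ξ)) (toComplex x) := by
    rw [hpre, logPotential, ← toComplex.measurePreserving.setIntegral_preimage_emb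
      toComplex.toHomeomorph.measurableEmbedding]
    simp only [← map_sub, LinearIsometryEquiv.norm_map]
  rw [Ψell, hpot, mul_div_assoc]

lemma tanh_pos_of_pos {ξ : ℝ} (hξ : 0 < ξ) : 0 < Real.tanh ξ := by
  rw [Real.tanh_eq_sinh_div_cosh]
  exact div_pos (Real.sinh_pos_iff.2 hξ) (Real.cosh_pos ξ)

lemma Ωell_pos {ξ : ℝ} (hξ : 0 < ξ) : 0 < Ωell ξ :=
  div_pos (tanh_pos_of_pos hξ) (pow_pos (add_pos one_pos (tanh_pos_of_pos hξ)) 2)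

lemma hasGradientAt_Ψell {ξ : ℝ} (hξ : 0 < ξ) {c s : ℝ} (hcs : c ^ 2 + s ^ 2 = 1) :
    HasGradientAt (Ψell ξ) (Ωell ξ • pt (Real.tanh ξ * c) s) (pt c (Real.tanh ξ * s)) := by
  have hb := tanh_pos_of_pos hξ
  have hu : ‖(⟨c, s⟩ : ℂ)‖ = 1 := by
    rw [← sq_eq_sq₀ (norm_nonneg _) zero_le_one, norm_sq_eq_re_sq_add_im_sq, hcs, one_pow]
  have hx : toComplex (pt c (Real.tanh ξ * s)) = verticalScale (Real.tanh ξ) ⟨c, s⟩ := by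
    rw [toComplex_pt]
    exact Complex.ext (re_verticalScale _ ⟨c, s⟩).symm (im_verticalScale _ ⟨c, s⟩).symm
  have hpot := hasGradientAt_logPotential_openEllipse_verticalScale hb (Real.tanh_lt_one ξ).le hu
  rw [← hx] at hpot
  have hgrad := hasGradientAt_sub
    (hasGradientAt_const_mul (1 / (2 * π)) (hasGradientAt_comp_linearIsometryEquiv toComplex hpot))
    (hasGradientAt_const_mul (Ωell ξ) (hasGradientAt_half_norm_sq (pt c (Real.tanh ξ * s))))
  rw [← funext (Ψell_eq_logPotential ξ)] at hgrad
  convert hgrad using 1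
  apply toComplex.injective
  simp only [map_sub, map_smul, LinearIsometryEquiv.apply_symm_apply, toComplex_pt]
  have hΩ : 1 / (2 * π) * (2 * π * (Real.tanh ξ / (1 + Real.tanh ξ)))
      = Ωell ξ * (1 + Real.tanh ξ) := by
    rw [Ωell]
    field_simp
  rw [smul_smul, hΩ]
  apply Complex.ext
  · simp only [Complex.smul_re, Complex.sub_re, smul_eq_mul]
    ring
  · simp only [Complex.smul_im, Complex.sub_im, smul_eq_mul]
    ring

lemma norm_sq_pt (a b : ℝ) : ‖pt a b‖ ^ 2 = a ^ 2 + b ^ 2 := by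
  simp [EuclideanSpace.norm_sq_eq, pt]

lemma ept_self (ξ η : ℝ) : ept ξ ξ η = pt (Real.cos η) (Real.tanh ξ * Real.sin η) := by
  have hcosh := (Real.cosh_pos ξ).ne'
  rw [ept, Real.tanh_eq_sinh_div_cosh, inv_mul_cancel₀ hcosh, one_mul, inv_mul_eq_div]

lemma hasDerivAt_pt {f g : ℝ → ℝ} {f' g' t : ℝ} (hf : HasDerivAt f f' t) (hg : HasDerivAt g g' t) :
    HasDerivAt (fun t => pt (f t) (g t)) (pt f' g') t := by
  refine (PiLp.continuousLinearEquiv 2 ℝ fun _ : Fin 2 => ℝ).symm.hasFDerivAt.comp_hasDerivAt t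
    (f := fun t => ![f t, g t]) (f' := ![f', g']) (hasDerivAt_pi.2 fun i => ?_)
  fin_cases i
  · exact hf
  · exact hg

lemma hasDerivAt_ept (ξ η : ℝ) :
    HasDerivAt (fun ζ => ept ξ ζ η) (pt (Real.tanh ξ * Real.cos η) (Real.sin η)) ξ := by
  have hcosh := (Real.cosh_pos ξ).ne'
  have h := hasDerivAt_pt
    (((Real.hasDerivAt_cosh ξ).const_mul (Real.cosh ξ)⁻¹).mul_const (Real.cos η))
    (((Real.hasDerivAt_sinh ξ).const_mul (Real.cosh ξ)⁻¹).mul_const (Real.sin η))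
  rwa [inv_mul_eq_div, ← Real.tanh_eq_sinh_div_cosh, inv_mul_cancel₀ hcosh, one_mul] at h

lemma Ωell_mul_norm_sq (ξ η : ℝ) :
    Ωell ξ * ‖pt (Real.tanh ξ * Real.cos η) (Real.sin η)‖ ^ 2
      = Real.tanh ξ / (2 * Real.exp (2 * ξ)) * (Real.cosh (2 * ξ) - Real.cos (2 * η)) := by
  have hexp : Real.exp (2 * ξ) = (Real.cosh ξ + Real.sinh ξ) ^ 2 := by
    rw [Real.cosh_add_sinh, ← Real.exp_nat_mul, Nat.cast_ofNat]
  have htanh : 1 + Real.tanh ξ = (Real.cosh ξ + Real.sinh ξ) / Real.cosh ξ := by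
    rw [Real.tanh_eq_sinh_div_cosh, add_div, div_self (Real.cosh_pos ξ).ne']
  have hdiff : Real.cosh (2 * ξ) - Real.cos (2 * η)
      = 2 * (Real.sinh ξ ^ 2 * Real.cos η ^ 2 + Real.cosh ξ ^ 2 * Real.sin η ^ 2) := by
    rw [Real.cosh_two_mul, Real.cos_two_mul]
    linear_combination (2 * Real.cos η ^ 2 - 1) * Real.cosh_sq ξ
      - 2 * Real.cosh ξ ^ 2 * Real.sin_sq_add_cos_sq η
  rw [Ωell, norm_sq_pt, hexp, htanh, hdiff, Real.tanh_eq_sinh_div_cosh]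
  field_simp

lemma hasDerivAt_Ψell_ept {ξ : ℝ} (hξ : 0 < ξ) (η : ℝ) :
    HasDerivAt (fun ζ => Ψell ξ (ept ξ ζ η))
      (Real.tanh ξ / (2 * Real.exp (2 * ξ)) * (Real.cosh (2 * ξ) - Real.cos (2 * η))) ξ := by
  have hgrad := hasGradientAt_Ψell hξ (Real.cos_sq_add_sin_sq η)
  refine (hgrad.hasFDerivAt.comp_hasDerivAt_of_eq ξ (hasDerivAt_ept ξ η)
    (ept_self ξ η).symm).congr_deriv ?_
  rw [InnerProductSpace.toDual_apply_apply, real_inner_smul_left, real_inner_self_eq_norm_sq,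
    Ωell_mul_norm_sq]

lemma exists_eq_pt_of_mem_frontier_Eell {ξ : ℝ} (hξ : ξ ≠ 0) {x : Pt} (hx : x ∈ frontier (Eell ξ)) :
    ∃ c s : ℝ, c ^ 2 + s ^ 2 = 1 ∧ x = pt c (Real.tanh ξ * s) := by
  have hb : Real.tanh ξ ≠ 0 := by
    simpa only [Real.tanh_zero] using Real.tanh_injective.ne hξ
  have hfrontier : x 0 ^ 2 + (x 1 / Real.tanh ξ) ^ 2 = 1 :=
    frontier_lt_subset_eq (f := fun x : Pt => x 0 ^ 2 + (x 1 / Real.tanh ξ) ^ 2)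
      (g := fun _ => 1) (by fun_prop) continuous_const hx
  refine ⟨x 0, x 1 / Real.tanh ξ, hfrontier, ?_⟩
  rw [mul_div_cancel₀ _ hb]
  ext i
  fin_cases i <;> rfl

lemma le_norm_gradient_Ψell {ξ : ℝ} (hξ : 0 < ξ) {x : Pt} (hx : x ∈ frontier (Eell ξ)) :
    Ωell ξ * Real.tanh ξ ≤ ‖gradient (Ψell ξ) x‖ := by
  obtain ⟨c, s, hcs, rfl⟩ := exists_eq_pt_of_mem_frontier_Eell hξ.ne' hx
  have hb := tanh_pos_of_pos hξ
  have hb₁ : Real.tanh ξ ^ 2 ≤ 1 := pow_le_one₀ hb.le (Real.tanh_lt_one ξ).le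
  have hΩ := Ωell_pos hξ
  have hnorm : Real.tanh ξ ≤ ‖pt (Real.tanh ξ * c) s‖ := by
    rw [← sq_le_sq₀ hb.le (norm_nonneg _), norm_sq_pt]
    nlinarith [mul_nonneg (sub_nonneg.2 hb₁) (sq_nonneg s)]
  rw [(hasGradientAt_Ψell hξ hcs).gradient, norm_smul, Real.norm_of_nonneg hΩ.le]
  exact mul_le_mul_of_nonneg_left hnorm hΩ.le

end KirchhoffVortex

/-- **Normal derivative of the Kirchhoff stream function** (Lemma on stream
functions for Kirchhoff vortices, item 3). -/
theorem kirchhoff_stream_function_normal_derivative (ξ : ℝ) (hξ : 0 < ξ) :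
    (∀ η : ℝ,
      HasDerivAt (fun ζ : ℝ => Ψell ξ (ept ξ ζ η))
        (Real.tanh ξ / (2 * Real.exp (2 * ξ)) * (Real.cosh (2 * ξ) - Real.cos (2 * η))) ξ ∧
      0 < Real.tanh ξ / (2 * Real.exp (2 * ξ)) * (Real.cosh (2 * ξ) - Real.cos (2 * η))) ∧
    ∃ ε : ℝ, 0 < ε ∧ ∀ x ∈ frontier (Eell ξ), ε ≤ ‖gradient (Ψell ξ) x‖ := by
  have htanh := tanh_pos_of_pos hξ
  refine ⟨fun η => ⟨hasDerivAt_Ψell_ept hξ η, ?_⟩, Ωell ξ * Real.tanh ξ,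
    mul_pos (Ωell_pos hξ) htanh, fun x hx => le_norm_gradient_Ψell hξ hx⟩
  have hcosh : 1 < Real.cosh (2 * ξ) := Real.one_lt_cosh.2 (by positivity)
  exact mul_pos (by positivity) (sub_pos.2 ((Real.cos_le_one (2 * η)).trans_lt hcosh))
end
end
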